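/- arXiv:math/0402165 — 2 statements merged into one kernel-verified Lean document; each statement's English description precedes it below -/
import Mathlib

section
/- Let d > 1 and let α be a faithful, irreducible ℤ^d-action by automorphisms of 𝕋^n, and let λ denote Lebesgue (Haar) measure on 𝕋^n. For any α-invariant Borel probability measure μ on 𝕋^n there exists a single constant c = c_μ ∈ [0,1] such that for every 𝐧 ∈ ℤ^d, h_μ(α_𝐧) = c · h_λ(α_𝐧). -/
open MeasureTheory ENNReal

section Entropy

variable {α : Type*} [MeasurableSpace α]

/-- `P : Fin m → Set α` is a finite measurable partition of `α` modulo `μ`-null sets. -/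
def IsFinMeasPartition (μ : Measure α) {m : ℕ} (P : Fin m → Set α) : Prop :=
  (∀ i, MeasurableSet (P i)) ∧ Pairwise (Function.onFun Disjoint P) ∧ μ (⋃ i, P i)ᶜ = 0

/-- Shannon entropy (information) of a finite family of sets with respect to `μ`. -/
noncomputable def finPartitionEntropy (μ : Measure α) {ι : Type*} [Fintype ι]
    (P : ι → Set α) : ℝ≥0∞ :=
  ENNReal.ofReal (∑ i, Real.negMulLog ((μ (P i)).toReal))

/-- The common refinement `P ∨ T⁻¹ P ∨ ⋯ ∨ T^{-(n-1)} P`, indexed by `Fin n → Fin m`. -/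
def refinedPartition (T : α → α) {m : ℕ} (P : Fin m → Set α) (n : ℕ) :
    (Fin n → Fin m) → Set α :=
  fun f => ⋂ i : Fin n, T^[(i : ℕ)] ⁻¹' P (f i)

/-- The measure-theoretic (Kolmogorov–Sinai) entropy `h_μ(T)` of a transformation `T`
preserving `μ`, defined as the supremum over all finite measurable partitions `P` of
`inf_n H_μ(P ∨ T⁻¹P ∨ ⋯ ∨ T^{-n}P)/(n+1)` (by subadditivity this infimum equals the
usual limit). -/
noncomputable def ksEntropy (T : α → α) (μ : Measure α) : ℝ≥0∞ :=
  ⨆ (m : ℕ) (P : Fin m → Set α) (_ : IsFinMeasPartition μ P),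
    ⨅ n : ℕ, finPartitionEntropy μ (refinedPartition T P (n + 1)) / (n + 1 : ℝ≥0∞)

end Entropy

open MeasureTheory

/-- The endomorphism of the torus `𝕋^n = (ℝ/ℤ)^n` induced by an integer matrix `A`. -/
noncomputable def toralMap {N : ℕ} (A : Matrix (Fin N) (Fin N) ℤ)
    (x : Fin N → UnitAddCircle) : Fin N → UnitAddCircle :=
  fun i => ∑ j, A i j • x j

/-- A `ℤ^d`-action `α` by toral automorphisms is irreducible when restricted to a
subgroup `Λ ≤ ℤ^d` if every closed `Λ`-invariant proper subgroup of the torus is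
finite. -/
def IsIrreducibleOn {d N : ℕ} (α : (Fin d → ℤ) → Matrix (Fin N) (Fin N) ℤ)
    (Λ : AddSubgroup (Fin d → ℤ)) : Prop :=
  ∀ S : AddSubgroup (Fin N → UnitAddCircle), IsClosed (S : Set (Fin N → UnitAddCircle)) →
    (∀ v ∈ Λ, ∀ x ∈ S, toralMap (α v) x ∈ S) → S ≠ ⊤ →
    (S : Set (Fin N → UnitAddCircle)).Finite

/-!
By irreducibility `ℚ^N` is a simple module over the commutative algebra generated by the matrices,
so it can be identified with a number field `K` on which each matrix `A` acts as multiplication by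
some `θ ∈ K`. A complex embedding `σ` of `K` extends to a functional `φ σ` on `ℝ^N` with
`φ σ (A u) = σ θ * φ σ u`. Since nonzero algebraic integers have norm at least `1` in absolute
value, `∏ σ, ‖φ σ z‖` is bounded away from zero for nonzero lattice points `z`.

Write `a σ = ‖σ θ‖` and `L(A) = ∑ σ, log⁺ (a σ)`, and fix exponents `γ σ ≥ 0` whose sum is at least
`L(A)`. Points which are `exp (-n γ σ)`-close in each coordinate `φ σ` stay
`exp (n (log⁺ (a σ) - γ σ))`-close under the first `n` iterates of `A`. Boxes with these larger side
lengths, though possibly long in some directions, have bounded volume, so the bound on lattice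
points shows that a partition into such boxes generates for `A`. Hence `n h_μ(A)` is, up to a
controlled error, at most the `μ`-entropy of a partition into boxes with side lengths
`exp (-n γ σ)`.

If `L(A) ≤ c * L(B)`, choose `γ σ = c * log⁺ (b σ)`: the itineraries of length `c * n` under `B`
determine points up to such boxes, which gives `h_μ(A) ≤ c * h_μ(B)`. Exchanging `A` and `B`, the
entropy `h_μ` is proportional to `L`, and so is the entropy of Haar measure. Finally, the
`μ`-entropy of a partition into translates of one box is at most the logarithm of their number,
which is the Haar entropy of the partition up to a bounded error; this gives `h_μ ≤ h_λ`.
-/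

namespace ToralEntropy

open scoped Real

section Shannon

variable {Ω ι κ : Type*} [MeasurableSpace Ω]

lemma integrable_comp_of_finite [Finite ι] [MeasurableSpace ι] [MeasurableSingletonClass ι]
    {μ : Measure Ω} [IsFiniteMeasure μ] {f : Ω → ι} (hf : Measurable f) (F : ι → ℝ) :
    Integrable (fun x => F (f x)) μ :=
  (Integrable.of_finite (μ := μ.map f)).comp_measurable hf

lemma ae_measureReal_fiber_pos [Finite ι] {μ : Measure Ω} [IsFiniteMeasure μ] (f : Ω → ι) :
    ∀ᵐ x ∂μ, 0 < μ.real (f ⁻¹' {f x}) := by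
  have h_fiber (i : ι) : ∀ᵐ x ∂μ, f x = i → 0 < μ.real (f ⁻¹' {i}) := by
    by_cases hi : μ (f ⁻¹' {i}) = 0
    · filter_upwards [measure_eq_zero_iff_ae_notMem.1 hi] with x hx hxi using (hx hxi).elim
    · exact .of_forall fun _ _ => ENNReal.toReal_pos hi (measure_ne_top μ _)
  filter_upwards [ae_all_iff.2 h_fiber] with x hx using hx _ rfl

variable [Fintype ι] [Fintype κ]

/-- The Shannon entropy of the distribution of a function with finitely many values; equivalently,
of the partition of `Ω` into the fibres of `f`. -/
noncomputable def entropy (μ : Measure Ω) (f : Ω → ι) : ℝ :=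
  ∑ i, Real.negMulLog (μ.real (f ⁻¹' {i}))

lemma entropy_nonneg (μ : Measure Ω) [IsZeroOrProbabilityMeasure μ] (f : Ω → ι) :
    0 ≤ entropy μ f :=
  Finset.sum_nonneg fun _ _ => Real.negMulLog_nonneg measureReal_nonneg measureReal_le_one

lemma entropy_const (μ : Measure Ω) [IsProbabilityMeasure μ] (i : ι) :
    entropy μ (fun _ => i) = 0 := by
  classical
  refine Finset.sum_eq_zero fun j _ => ?_
  by_cases h : i = j <;> simp [h]

variable [MeasurableSpace ι] [MeasurableSingletonClass ι]
  [MeasurableSpace κ] [MeasurableSingletonClass κ] {μ : Measure Ω}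

lemma entropy_comp_measurePreserving {Ω' : Type*} [MeasurableSpace Ω'] {ν : Measure Ω'}
    {T : Ω → Ω'} (hT : MeasurePreserving T μ ν) {f : Ω' → ι} (hf : Measurable f) :
    entropy μ (f ∘ T) = entropy ν f := by
  refine Finset.sum_congr rfl fun i _ => ?_
  rw [Set.preimage_comp,
    hT.measureReal_preimage (hf (measurableSet_singleton i)).nullMeasurableSet]

variable [IsProbabilityMeasure μ] {f : Ω → ι} {g : Ω → κ}

lemma integral_comp_eq_sum (hf : Measurable f) (F : ι → ℝ) :
    ∫ x, F (f x) ∂μ = ∑ i, μ.real (f ⁻¹' {i}) * F i := by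
  rw [← integral_map hf.aemeasurable (Measurable.of_discrete (f := F)).aestronglyMeasurable,
    integral_fintype Integrable.of_finite]
  simp only [map_measureReal_apply hf (measurableSet_singleton _), smul_eq_mul]

lemma sum_measureReal_fiber (hf : Measurable f) : ∑ i, μ.real (f ⁻¹' {i}) = 1 := by
  simpa using (integral_comp_eq_sum (μ := μ) hf fun _ => 1).symm

lemma entropy_eq_integral (hf : Measurable f) :
    entropy μ f = ∫ x, -Real.log (μ.real (f ⁻¹' {f x})) ∂μ := by
  rw [integral_comp_eq_sum hf fun i => -Real.log (μ.real (f ⁻¹' {i})), entropy]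
  exact Finset.sum_congr rfl fun i _ => by rw [Real.negMulLog]; ring

lemma entropy_le_integral_neg_log (hf : Measurable f) {q : ι → ℝ}
    (hq : ∀ i, 0 ≤ q i) (hq_sum : ∑ i, q i ≤ 1) (hq_pos : ∀ᵐ x ∂μ, 0 < q (f x)) :
    entropy μ f ≤ ∫ x, -Real.log (q (f x)) ∂μ := by
  have h_term (i : ι) : Real.negMulLog (μ.real (f ⁻¹' {i})) ≤
      μ.real (f ⁻¹' {i}) * -Real.log (q i) + (q i - μ.real (f ⁻¹' {i})) := by
    rcases (measureReal_nonneg (μ := μ) (s := f ⁻¹' {i})).eq_or_lt with hp | hp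
    · simp [← hp, hq i]
    obtain ⟨x, rfl, hx⟩ := Measure.exists_mem_of_measure_ne_zero_of_ae
      (ENNReal.toReal_ne_zero.1 hp.ne').1 (ae_restrict_of_ae hq_pos)
    have h_log := Real.log_le_sub_one_of_pos (div_pos hx hp)
    rw [Real.log_div hx.ne' hp.ne', div_sub_one hp.ne', le_div_iff₀' hp] at h_log
    rw [Real.negMulLog]
    linarith
  calc entropy μ f
      ≤ ∑ i, (μ.real (f ⁻¹' {i}) * -Real.log (q i) + (q i - μ.real (f ⁻¹' {i}))) :=
        Finset.sum_le_sum fun i _ => h_term i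
    _ = ∫ x, -Real.log (q (f x)) ∂μ + (∑ i, q i - 1) := by
        rw [Finset.sum_add_distrib, Finset.sum_sub_distrib, sum_measureReal_fiber hf,
          integral_comp_eq_sum hf fun i => -Real.log (q i)]
    _ ≤ ∫ x, -Real.log (q (f x)) ∂μ := by linarith

lemma entropy_le_of_factorsThrough (hg : Measurable g) (hfg : f.FactorsThrough g) :
    entropy μ f ≤ entropy μ g := by
  obtain ⟨x₀⟩ := nonempty_of_isProbabilityMeasure μ
  have : Nonempty ι := ⟨f x₀⟩
  have hf : Measurable f := by
    obtain ⟨φ, rfl⟩ := (Function.factorsThrough_iff f).1 hfg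
    exact Measurable.of_discrete.comp hg
  rw [entropy_eq_integral hf, entropy_eq_integral hg]
  refine integral_mono_ae
    (integrable_comp_of_finite hf fun i => -Real.log (μ.real (f ⁻¹' {i})))
    (integrable_comp_of_finite hg fun j => -Real.log (μ.real (g ⁻¹' {j}))) ?_
  filter_upwards [ae_measureReal_fiber_pos g] with x hx
  exact neg_le_neg <| Real.log_le_log hx <| measureReal_mono fun y (hy : g y = g x) => hfg hy

lemma entropy_prodMk_le (hf : Measurable f) (hg : Measurable g) :
    entropy μ (fun x => (f x, g x)) ≤ entropy μ f + entropy μ g := by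
  calc entropy μ (fun x => (f x, g x))
      ≤ ∫ x, -Real.log (μ.real (f ⁻¹' {f x}) * μ.real (g ⁻¹' {g x})) ∂μ := by
        refine entropy_le_integral_neg_log (hf.prodMk hg)
          (q := fun p => μ.real (f ⁻¹' {p.1}) * μ.real (g ⁻¹' {p.2}))
          (fun _ => by positivity) ?_ ?_
        · simp [Fintype.sum_prod_type, ← Finset.mul_sum, sum_measureReal_fiber hf,
            sum_measureReal_fiber hg]
        · filter_upwards [ae_measureReal_fiber_pos f, ae_measureReal_fiber_pos g] with x hx hy
            using mul_pos hx hy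
    _ = ∫ x, (-Real.log (μ.real (f ⁻¹' {f x})) + -Real.log (μ.real (g ⁻¹' {g x}))) ∂μ := by
        refine integral_congr_ae ?_
        filter_upwards [ae_measureReal_fiber_pos f, ae_measureReal_fiber_pos g] with x hx hy
        rw [Real.log_mul hx.ne' hy.ne', neg_add]
    _ = entropy μ f + entropy μ g := by
        rw [entropy_eq_integral hf, entropy_eq_integral hg, integral_add
          (integrable_comp_of_finite hf fun i => -Real.log (μ.real (f ⁻¹' {i})))
          (integrable_comp_of_finite hg fun j => -Real.log (μ.real (g ⁻¹' {j})))]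

/-- Distributing the mass of each value of `g` uniformly over the at most `C` values that `f` may
then take gives a distribution to use in Gibbs' inequality `entropy_le_integral_neg_log`. -/
lemma entropy_le_entropy_add_log (hf : Measurable f) (hg : Measurable g) {C : ℕ}
    (h : ∀ y, ∃ J : Finset ι, J.card ≤ C ∧ ∀ x, g x = g y → f x ∈ J) :
    entropy μ f ≤ entropy μ g + Real.log C := by
  classical
  have hfiber : ∀ j, ∃ J : Finset ι, J.card ≤ C ∧ ∀ x, g x = j → f x ∈ J := fun j => by
    by_cases hj : ∃ y, g y = j
    · exact hj.choose_spec ▸ h hj.choose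
    · exact ⟨∅, C.zero_le, fun x hx => (hj ⟨x, hx⟩).elim⟩
  choose J hJ hmem using hfiber
  have hfg : ∀ x, f x ∈ J (g x) := fun x => hmem _ x rfl
  obtain ⟨x₀⟩ := nonempty_of_isProbabilityMeasure μ
  have hC : (0 : ℝ) < C := by
    exact_mod_cast (Finset.card_pos.2 ⟨_, hfg x₀⟩).trans_le (hJ _)
  let q : ι × κ → ℝ := fun p => if p.1 ∈ J p.2 then μ.real (g ⁻¹' {p.2}) / C else 0
  have hq_sum : ∑ p, q p ≤ 1 := by
    rw [Fintype.sum_prod_type_right, ← sum_measureReal_fiber (μ := μ) hg]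
    refine Finset.sum_le_sum fun j _ => ?_
    simp only [q, Finset.sum_ite_mem, Finset.univ_inter, Finset.sum_const, nsmul_eq_mul]
    rw [mul_div_assoc', div_le_iff₀ hC, mul_comm]
    gcongr
    exact hJ j
  calc entropy μ f
      ≤ entropy μ (fun x => (f x, g x)) :=
        entropy_le_of_factorsThrough (hf.prodMk hg) fun _ _ h => congrArg Prod.fst h
    _ ≤ ∫ x, -Real.log (q (f x, g x)) ∂μ := by
        refine entropy_le_integral_neg_log (hf.prodMk hg) (fun p => ?_) hq_sum ?_
        · simp only [q]; positivity
        · filter_upwards [ae_measureReal_fiber_pos g] with x hx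
          simpa only [q, hfg, if_true] using div_pos hx hC
    _ = ∫ x, (-Real.log (μ.real (g ⁻¹' {g x})) + Real.log C) ∂μ := by
        refine integral_congr_ae ?_
        filter_upwards [ae_measureReal_fiber_pos g] with x hx
        simp only [q, hfg, if_true, Real.log_div hx.ne' hC.ne', neg_sub]
        ring
    _ = entropy μ g + Real.log C := by
        rw [entropy_eq_integral hg, integral_add
          (integrable_comp_of_finite hg fun j => -Real.log (μ.real (g ⁻¹' {j})))
          (integrable_const _)]
        simp

lemma entropy_le_log_card (hf : Measurable f) : entropy μ f ≤ Real.log (Fintype.card ι) := by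
  simpa [entropy_const] using entropy_le_entropy_add_log (μ := μ) hf
    (measurable_const (a := ())) fun _ => ⟨Finset.univ, le_rfl, by simp⟩

lemma neg_log_le_entropy (hf : Measurable f) {t : ℝ} (ht : ∀ i, μ.real (f ⁻¹' {i}) ≤ t) :
    -Real.log t ≤ entropy μ f := by
  calc -Real.log t = ∫ _, -Real.log t ∂μ := by simp
    _ ≤ ∫ x, -Real.log (μ.real (f ⁻¹' {f x})) ∂μ := by
        refine integral_mono_ae (integrable_const _)
          (integrable_comp_of_finite hf fun i => -Real.log (μ.real (f ⁻¹' {i}))) ?_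
        filter_upwards [ae_measureReal_fiber_pos f] with x hx
        exact neg_le_neg (Real.log_le_log hx (ht _))
    _ = entropy μ f := (entropy_eq_integral hf).symm

end Shannon

section Itinerary

variable {Ω ι κ : Type*} {T : Ω → Ω} {f : Ω → ι}

/-- The first `n` symbols of the orbit of `x` under `T`, as read off by `f`; the fibres of
`itinerary T f n` form the common refinement of the preimages under `T ^ j`, `j < n`, of the
partition given by `f`. -/
def itinerary (T : Ω → Ω) (f : Ω → ι) (n : ℕ) (x : Ω) (j : Fin n) : ι := f (T^[j] x)

lemma itinerary_eq_iff {n : ℕ} {x y : Ω} :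
    itinerary T f n x = itinerary T f n y ↔ ∀ j < n, f (T^[j] x) = f (T^[j] y) :=
  funext_iff.trans Fin.forall_iff

lemma itinerary_eq_of_iterate_iterate {m n : ℕ} {x y : Ω}
    (h : itinerary T^[m] (itinerary T f m) n x = itinerary T^[m] (itinerary T f m) n y) :
    itinerary T f (n * m) x = itinerary T f (n * m) y := by
  refine itinerary_eq_iff.2 fun j hj => ?_
  have hm : 0 < m := Nat.pos_of_mul_pos_left (j.zero_le.trans_lt hj)
  have h_block := itinerary_eq_iff.1
    (itinerary_eq_iff.1 h (j / m) (Nat.div_lt_of_lt_mul (by rwa [mul_comm]))) (j % m)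
    (Nat.mod_lt _ hm)
  rwa [← Function.iterate_mul, ← Function.iterate_add_apply, ← Function.iterate_add_apply,
    Nat.mod_add_div] at h_block

variable [MeasurableSpace Ω]

lemma measurable_itinerary [MeasurableSpace ι] (hT : Measurable T) (hf : Measurable f) (n : ℕ) :
    Measurable (itinerary T f n) :=
  measurable_pi_lambda _ fun j => hf.comp (hT.iterate j)

variable [Fintype ι] {μ : Measure Ω}

/-- The entropy per unit of time of the process `f, f ∘ T, f ∘ T ^ 2, …`. By subadditivity the
infimum is a limit. -/
noncomputable def entropyRate (μ : Measure Ω) (T : Ω → Ω) (f : Ω → ι) : ℝ :=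
  sInf ((fun n : ℕ => entropy μ (itinerary T f n) / n) '' Set.Ici 1)

lemma le_entropyRate {a : ℝ} (h : ∀ n ≠ 0, a * n ≤ entropy μ (itinerary T f n)) :
    a ≤ entropyRate μ T f := by
  refine le_csInf (Set.nonempty_Ici.image _) ?_
  rintro _ ⟨n, hn, rfl⟩
  have hn : n ≠ 0 := Nat.one_le_iff_ne_zero.1 hn
  exact (le_div_iff₀ (by positivity)).2 (h n hn)

variable [IsProbabilityMeasure μ]

lemma bddBelow_entropy_itinerary_div :
    BddBelow ((fun n : ℕ => entropy μ (itinerary T f n) / n) '' Set.Ici 1) :=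
  ⟨0, by rintro _ ⟨n, -, rfl⟩; exact div_nonneg (entropy_nonneg _ _) n.cast_nonneg⟩

lemma entropyRate_nonneg : 0 ≤ entropyRate μ T f :=
  Real.sInf_nonneg <| by
    rintro _ ⟨n, -, rfl⟩
    exact div_nonneg (entropy_nonneg _ _) n.cast_nonneg

lemma entropyRate_le_div {n : ℕ} (hn : n ≠ 0) :
    entropyRate μ T f ≤ entropy μ (itinerary T f n) / n :=
  csInf_le bddBelow_entropy_itinerary_div ⟨n, Nat.one_le_iff_ne_zero.2 hn, rfl⟩

variable [MeasurableSpace ι] [MeasurableSingletonClass ι]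

lemma subadditive_entropy_itinerary (hT : MeasurePreserving T μ μ) (hf : Measurable f) :
    Subadditive fun n => entropy μ (itinerary T f n) := by
  intro m n
  have hm := measurable_itinerary hT.measurable hf m
  have hn := measurable_itinerary hT.measurable hf n
  have hTm := hT.iterate m
  calc entropy μ (itinerary T f (m + n))
      ≤ entropy μ (fun x => (itinerary T f m x, itinerary T f n (T^[m] x))) := by
        refine entropy_le_of_factorsThrough (hm.prodMk (hn.comp hTm.measurable)) fun x y h => ?_
        obtain ⟨h_fst, h_snd⟩ := Prod.ext_iff.1 h
        refine itinerary_eq_iff.2 fun j hj => ?_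
        rcases lt_or_ge j m with hjm | hjm
        · exact itinerary_eq_iff.1 h_fst j hjm
        · have h_shift := itinerary_eq_iff.1 h_snd (j - m) (by lia)
          rwa [← Function.iterate_add_apply, ← Function.iterate_add_apply,
            Nat.sub_add_cancel hjm] at h_shift
    _ ≤ entropy μ (itinerary T f m) + entropy μ (itinerary T f n ∘ T^[m]) :=
        entropy_prodMk_le hm (hn.comp hTm.measurable)
    _ = entropy μ (itinerary T f m) + entropy μ (itinerary T f n) := by
        rw [entropy_comp_measurePreserving hTm hn]

lemma entropy_itinerary_le_mul (hT : MeasurePreserving T μ μ) (hf : Measurable f) (n : ℕ) :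
    entropy μ (itinerary T f n) ≤ n * entropy μ f := by
  induction n with
  | zero =>
    simpa using entropy_le_log_card (μ := μ) (measurable_itinerary hT.measurable hf 0)
  | succ n ih =>
    have h_one : entropy μ (itinerary T f 1) ≤ entropy μ f :=
      entropy_le_of_factorsThrough hf fun x y h => itinerary_eq_iff.2 fun j hj => by
        rwa [Nat.lt_one_iff.1 hj]
    have h_succ := subadditive_entropy_itinerary hT hf n 1
    push_cast
    linarith

lemma exists_forall_entropy_itinerary_le (hT : MeasurePreserving T μ μ) (hf : Measurable f)
    {L : ℝ} (hL : entropyRate μ T f < L) :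
    ∃ C, ∀ n : ℕ, entropy μ (itinerary T f n) ≤ n * L + C := by
  have h_lim : Filter.Tendsto (fun n : ℕ => entropy μ (itinerary T f n) / n) Filter.atTop
      (nhds (entropyRate μ T f)) := by
    have h_lim := (subadditive_entropy_itinerary hT hf).tendsto_lim
      ⟨0, by rintro _ ⟨n, rfl⟩; exact div_nonneg (entropy_nonneg _ _) n.cast_nonneg⟩
    rwa [Subadditive.lim] at h_lim
  have h_ev : ∀ᶠ n : ℕ in Filter.atTop, entropy μ (itinerary T f n) - n * L ≤ 0 := by
    filter_upwards [h_lim.eventually_le_const hL, Filter.eventually_gt_atTop 0] with n hn hn0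
    rw [div_le_iff₀ (by positivity)] at hn
    linarith
  obtain ⟨C, hC⟩ := (Filter.isBoundedUnder_of_eventually_le h_ev).bddAbove_range
  exact ⟨C, fun n => by linarith [hC ⟨n, rfl⟩]⟩

lemma mul_entropyRate_le_entropyRate_iterate (hT : Measurable T) (hf : Measurable f) (m : ℕ) :
    m * entropyRate μ T f ≤ entropyRate μ T^[m] (itinerary T f m) := by
  rcases eq_or_ne m 0 with rfl | hm
  · simpa using entropyRate_nonneg
  refine le_entropyRate fun n hn => ?_
  have h_rate := entropyRate_le_div (μ := μ) (T := T) (f := f) (mul_ne_zero hn hm)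
  rw [le_div_iff₀ (by positivity)] at h_rate
  calc m * entropyRate μ T f * n = entropyRate μ T f * ↑(n * m) := by push_cast; ring
    _ ≤ entropy μ (itinerary T f (n * m)) := h_rate
    _ ≤ entropy μ (itinerary T^[m] (itinerary T f m) n) :=
        entropy_le_of_factorsThrough
          (measurable_itinerary (hT.iterate m) (measurable_itinerary hT hf m) n)
          fun _ _ => itinerary_eq_of_iterate_iterate

variable [Fintype κ] [MeasurableSpace κ] [MeasurableSingletonClass κ]

lemma entropyRate_comp_le (hT : Measurable T) (hf : Measurable f) (φ : ι → κ) :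
    entropyRate μ T (φ ∘ f) ≤ entropyRate μ T f := by
  refine le_entropyRate fun n hn => ?_
  have h_rate := entropyRate_le_div (μ := μ) (T := T) (f := φ ∘ f) hn
  rw [le_div_iff₀ (by positivity)] at h_rate
  exact h_rate.trans <| entropy_le_of_factorsThrough (measurable_itinerary hT hf n)
    fun x y h => itinerary_eq_iff.2 fun j hj => congrArg φ (itinerary_eq_iff.1 h j hj)

lemma entropy_itinerary_le_add {τ : Type*} [Fintype τ] [MeasurableSpace τ]
    [MeasurableSingletonClass τ] {η : Ω → κ} {g : Ω → τ} (hT : MeasurePreserving T μ μ)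
    (hf : Measurable f) (hη : Measurable η) (hg : Measurable g) {r w : ℕ}
    (h : ∀ x y, itinerary T η w x = itinerary T η w y → g (T^[r] x) = g (T^[r] y) →
      f (T^[r] x) = f (T^[r] y)) (n : ℕ) :
    entropy μ (itinerary T f n) ≤
      entropy μ (itinerary T g n) + entropy μ (itinerary T η (n + w)) := by
  have hTr := hT.iterate r
  have hg_meas := measurable_itinerary hT.measurable hg n
  have hη_meas := measurable_itinerary hT.measurable hη (n + w)
  rw [← entropy_comp_measurePreserving hTr (measurable_itinerary hT.measurable hf n),
    ← entropy_comp_measurePreserving hTr hg_meas]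
  refine le_trans (entropy_le_of_factorsThrough
    ((hg_meas.comp hTr.measurable).prodMk hη_meas) fun x y hxy => ?_)
    (entropy_prodMk_le (hg_meas.comp hTr.measurable) hη_meas)
  obtain ⟨hg_eq, hη_eq⟩ := Prod.ext_iff.1 hxy
  refine itinerary_eq_iff.2 fun j hj => ?_
  have hg_j := itinerary_eq_iff.1 hg_eq j hj
  rw [← Function.iterate_add_apply, ← Function.iterate_add_apply, add_comm j,
    Function.iterate_add_apply, Function.iterate_add_apply] at hg_j ⊢
  refine h _ _ (itinerary_eq_iff.2 fun i hi => ?_) hg_j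
  rw [← Function.iterate_add_apply, ← Function.iterate_add_apply]
  exact itinerary_eq_iff.1 hη_eq (i + j) (by lia)

lemma entropy_itinerary_le_entropy_add_mul_log (hT : Measurable T) (hf : Measurable f)
    {g : Ω → κ} (hg : Measurable g) (n : ℕ) {C : ℕ}
    (h : ∀ j < n, ∀ y, ∃ J : Finset ι, J.card ≤ C ∧ ∀ x, g x = g y → f (T^[j] x) ∈ J) :
    entropy μ (itinerary T f n) ≤ entropy μ g + n * Real.log C := by
  rw [← Real.log_pow, ← Nat.cast_pow]
  refine entropy_le_entropy_add_log (measurable_itinerary hT hf n) hg fun y => ?_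
  choose J hcard hJ using fun j : Fin n => h j j.2 y
  refine ⟨Fintype.piFinset J, ?_, fun x hxy => Fintype.mem_piFinset.2 fun j => hJ j x hxy⟩
  rw [Fintype.card_piFinset]
  simpa using Finset.prod_le_pow_card Finset.univ _ _ fun j _ => hcard j

end Itinerary

section KolmogorovSinai

variable {Ω ι : Type*} {T : Ω → Ω}

lemma refinedPartition_fiber {m : ℕ} (f : Ω → Fin m) (n : ℕ) (c : Fin n → Fin m) :
    refinedPartition T (fun i => f ⁻¹' {i}) n c = itinerary T f n ⁻¹' {c} := by
  ext x
  simp [refinedPartition, itinerary, funext_iff]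

variable [MeasurableSpace Ω] {μ : Measure Ω}

lemma isFinMeasPartition_fiber {m : ℕ} {f : Ω → Fin m} (hf : Measurable f) :
    IsFinMeasPartition μ fun i => f ⁻¹' {i} := by
  refine ⟨fun i => hf (measurableSet_singleton i), fun i j hij => ?_, ?_⟩
  · exact Disjoint.preimage f (Set.disjoint_singleton.2 hij)
  · simp [← Set.preimage_iUnion, Set.iUnion_of_singleton]

variable [IsProbabilityMeasure μ]

lemma iInf_ofReal_entropy_itinerary_div [Fintype ι] (f : Ω → ι) :
    ⨅ n : ℕ, ENNReal.ofReal (entropy μ (itinerary T f (n + 1))) / (n + 1 : ℝ≥0∞) =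
      ENNReal.ofReal (entropyRate μ T f) := by
  have h_div (n : ℕ) : ENNReal.ofReal (entropy μ (itinerary T f (n + 1))) / (n + 1 : ℝ≥0∞) =
      ENNReal.ofReal (entropy μ (itinerary T f (n + 1)) / (n + 1 : ℕ)) := by
    rw [ENNReal.ofReal_div_of_pos (by positivity), ENNReal.ofReal_natCast, Nat.cast_succ]
  simp only [h_div]
  refine le_antisymm ?_ (le_iInf fun n => ofReal_le_ofReal (entropyRate_le_div n.succ_ne_zero))
  set a := ⨅ n : ℕ, ENNReal.ofReal (entropy μ (itinerary T f (n + 1)) / (n + 1 : ℕ))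
  have ha : a ≠ ⊤ := ne_top_of_le_ne_top ofReal_ne_top (iInf_le _ 0)
  rw [le_ofReal_iff_toReal_le ha entropyRate_nonneg]
  refine le_entropyRate fun n hn => ?_
  obtain ⟨n, rfl⟩ := Nat.exists_eq_succ_of_ne_zero hn
  rw [← le_div_iff₀ (by positivity),
    ← le_ofReal_iff_toReal_le ha (div_nonneg (entropy_nonneg _ _) (Nat.cast_nonneg _))]
  exact iInf_le _ n

lemma ofReal_entropyRate_le_ksEntropy [Fintype ι] [MeasurableSpace ι]
    [MeasurableSingletonClass ι] (hT : Measurable T) {f : Ω → ι} (hf : Measurable f) :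
    ENNReal.ofReal (entropyRate μ T f) ≤ ksEntropy T μ := by
  let e := Fintype.equivFin ι
  have hef : Measurable (e ∘ f) := Measurable.of_discrete.comp hf
  have h_rate : entropyRate μ T f ≤ entropyRate μ T (e ∘ f) := by
    simpa [← Function.comp_assoc] using entropyRate_comp_le (μ := μ) hT hef e.symm
  refine (ofReal_le_ofReal h_rate).trans ?_
  rw [← iInf_ofReal_entropy_itinerary_div]
  refine le_iSup₂_of_le (Fintype.card ι) (fun i => (e ∘ f) ⁻¹' {i}) <|
    le_iSup_of_le (isFinMeasPartition_fiber hef) (iInf_mono fun n => ?_)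
  simp only [finPartitionEntropy, refinedPartition_fiber]
  exact le_rfl

lemma exists_measurable_fiber_ae_eq {m : ℕ} {P : Fin m → Set Ω} (hP : IsFinMeasPartition μ P) :
    ∃ f : Ω → Fin m, Measurable f ∧ ∀ i, f ⁻¹' {i} =ᵐ[μ] P i := by
  obtain ⟨hP_meas, hP_disj, hP_null⟩ := hP
  have h_ae : ∀ᵐ x ∂μ, ∃ i, x ∈ P i := by
    filter_upwards [measure_eq_zero_iff_ae_notMem.1 hP_null] with x hx
    simpa using hx
  obtain ⟨x₀, i₀, -⟩ := h_ae.exists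
  have : Nonempty (Fin m) := ⟨i₀⟩
  obtain ⟨f, hf, hfP⟩ := exists_measurable_piecewise P hP_meas (fun i _ => i)
    (fun _ => measurable_const)
    (fun i j hij x hx => ((hP_disj hij).le_bot hx).elim)
  refine ⟨f, hf, fun i => ?_⟩
  filter_upwards [h_ae] with x ⟨j, hj⟩
  refine propext ⟨fun (hx : f x = i) => ?_, fun hx => hfP i hx⟩
  rwa [← hx, hfP j hj]

lemma ksEntropy_le (hT : MeasurePreserving T μ μ) {a : ℝ≥0∞}
    (h : ∀ (m : ℕ) (f : Ω → Fin m), Measurable f → ENNReal.ofReal (entropyRate μ T f) ≤ a) :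
    ksEntropy T μ ≤ a := by
  refine iSup_le fun m => iSup₂_le fun P hP => ?_
  obtain ⟨f, hf, hfP⟩ := exists_measurable_fiber_ae_eq hP
  refine le_trans (le_of_eq ?_) (h m f hf)
  rw [← iInf_ofReal_entropy_itinerary_div]
  refine iInf_congr fun n => ?_
  have h_ae (c : Fin (n + 1) → Fin m) :
      refinedPartition T P (n + 1) c =ᵐ[μ] itinerary T f (n + 1) ⁻¹' {c} := by
    rw [← refinedPartition_fiber]
    exact Filter.EventuallyEq.countable_iInter fun j =>
      (hT.iterate j).quasiMeasurePreserving.preimage_ae_eq (hfP (c j)).symm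
  simp only [finPartitionEntropy, entropy, measureReal_def, measure_congr (h_ae _)]

end KolmogorovSinai

section Generator

lemma le_of_forall_nat_mul_le_add {a b c : ℝ} (h : ∀ n : ℕ, n ≠ 0 → n * a ≤ n * b + c) :
    a ≤ b := by
  by_contra! hba
  obtain ⟨n, hn⟩ := exists_nat_gt (|c| / (a - b))
  have hn0 : n ≠ 0 := by
    rintro rfl
    exact absurd hn (not_lt.2 (by simpa using div_nonneg (abs_nonneg c) (sub_pos.2 hba).le))
  rw [div_lt_iff₀ (sub_pos.2 hba)] at hn
  linarith [h n hn0, le_abs_self c]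

lemma exists_pos_forall_entropy_le {Ω ι : Type*} [MeasurableSpace Ω] [Fintype ι]
    [MeasurableSpace ι] [MeasurableSingletonClass ι] (μ : Measure Ω) [IsProbabilityMeasure μ]
    (i₀ : ι) {ε : ℝ} (hε : 0 < ε) :
    ∃ t > 0, ∀ g : Ω → ι, Measurable g → μ.real (g ⁻¹' {i₀})ᶜ ≤ t → entropy μ g ≤ ε := by
  classical
  let H : (ι → ℝ) → ℝ := fun p => ∑ i, Real.negMulLog (p i)
  have hH : Continuous H := by fun_prop
  have hH₀ : H (Pi.single i₀ 1) = 0 :=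
    Finset.sum_eq_zero fun i _ => by by_cases h : i = i₀ <;> simp [h]
  obtain ⟨t, ht, h_near⟩ := Metric.eventually_nhds_iff.1 <|
    (hH.tendsto (Pi.single i₀ 1)).eventually_le_const (hH₀ ▸ hε)
  refine ⟨t / 2, half_pos ht, fun g hg hgt => h_near ?_⟩
  refine lt_of_le_of_lt ((dist_pi_le_iff (half_pos ht).le).2 fun i => ?_) (half_lt_self ht)
  rcases eq_or_ne i i₀ with rfl | hi
  · rwa [Pi.single_eq_same, dist_comm, Real.dist_eq,
      ← probReal_compl_eq_one_sub (hg (measurableSet_singleton i)), abs_of_nonneg (by positivity)]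
  · rw [Pi.single_eq_of_ne hi, Real.dist_eq, sub_zero, abs_of_nonneg (by positivity)]
    refine (measureReal_mono fun x (hx : g x = i) => ?_).trans hgt
    simpa [hx] using hi

variable {X ι : Type*} [MetricSpace X] [MeasurableSpace X] [OpensMeasurableSpace X]
  [MeasurableSpace ι] [MeasurableSingletonClass ι]

lemma exists_isCompact_forall_dist_lt_imp_eq [Finite ι] (μ : Measure X)
    [IsFiniteMeasure μ] [μ.InnerRegularCompactLTTop] {f : X → ι} (hf : Measurable f) {t : ℝ}
    (ht : 0 < t) :
    ∃ G, IsCompact G ∧ μ.real Gᶜ ≤ t ∧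
      ∃ δ > 0, ∀ x ∈ G, ∀ y ∈ G, dist x y < δ → f x = f y := by
  have := Fintype.ofFinite ι
  have h_inner (i : ι) : ∃ K ⊆ f ⁻¹' {i}, IsCompact K ∧
      μ (f ⁻¹' {i} \ K) < ENNReal.ofReal (t / Fintype.card ι) := by
    have : Nonempty ι := ⟨i⟩
    refine (hf (measurableSet_singleton i)).exists_isCompact_sdiff_lt (measure_ne_top μ _) ?_
    rw [ne_eq, ofReal_eq_zero, not_le]
    positivity
  choose K hKf hK hKμ using h_inner
  have hG : IsCompact (⋃ i, K i) := isCompact_iUnion hK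
  have h_mem {x : X} {i : ι} (hx : x ∈ ⋃ j, K j) (hi : x ∈ (⋃ j ≠ i, K j)ᶜ) : f x = i := by
    obtain ⟨j, hj⟩ := Set.mem_iUnion.1 hx
    by_contra hxi
    exact hi (Set.mem_biUnion (show j ≠ i from (hKf j hj : f x = j) ▸ hxi) hj)
  obtain ⟨δ, hδ, h_ball⟩ := lebesgue_number_lemma_of_metric hG
    (c := fun i => (⋃ j ≠ i, K j)ᶜ)
    (fun i => (Set.toFinite _).isClosed_biUnion (fun j _ => (hK j).isClosed) |>.isOpen_compl)
    fun x _ => by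
      refine Set.mem_iUnion.2 ⟨f x, fun h => ?_⟩
      obtain ⟨j, hjx, hj⟩ := Set.mem_iUnion₂.1 h
      exact hjx (hKf j hj : f x = j).symm
  refine ⟨⋃ i, K i, hG, ?_, δ, hδ, fun x hx y hy hxy => ?_⟩
  · have h_sub : (⋃ i, K i)ᶜ ⊆ ⋃ i, f ⁻¹' {i} \ K i := fun x hx =>
      Set.mem_iUnion.2 ⟨f x, rfl, fun h => hx (Set.mem_iUnion_of_mem _ h)⟩
    calc μ.real (⋃ i, K i)ᶜ ≤ ∑ i, μ.real (f ⁻¹' {i} \ K i) :=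
          (measureReal_mono h_sub).trans (measureReal_iUnion_fintype_le _)
      _ ≤ ∑ _ : ι, t / Fintype.card ι := Finset.sum_le_sum fun i _ =>
          toReal_le_of_le_ofReal (by positivity) (hKμ i).le
      _ = t * (Fintype.card ι / Fintype.card ι) := by
          rw [Finset.sum_const, Finset.card_univ, nsmul_eq_mul, mul_div_left_comm]
      _ ≤ t := mul_le_of_le_one_right ht.le (div_self_le_one _)
  · obtain ⟨i, hi⟩ := h_ball x hx
    rw [h_mem hx (hi (Metric.mem_ball_self hδ)), h_mem hy (hi (Metric.mem_ball'.2 hxy))]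

lemma exists_entropy_le_and_forall_dist_lt_imp_eq [Fintype ι] (μ : Measure X)
    [IsProbabilityMeasure μ] [μ.InnerRegularCompactLTTop] {f : X → ι} (hf : Measurable f) {ε : ℝ}
    (hε : 0 < ε) :
    ∃ δ > 0, ∃ g : X → Bool × ι, Measurable g ∧ entropy μ g ≤ ε ∧
      ∀ x y, dist x y < δ → g x = g y → f x = f y := by
  classical
  obtain ⟨x₀⟩ := nonempty_of_isProbabilityMeasure μ
  obtain ⟨t, ht, h_small⟩ := exists_pos_forall_entropy_le μ (true, f x₀) hε
  obtain ⟨G, hG, hGt, δ, hδ, h_eq⟩ := exists_isCompact_forall_dist_lt_imp_eq μ hf ht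
  let g : X → Bool × ι := fun x => if x ∈ G then (true, f x₀) else (false, f x)
  have hg : Measurable g :=
    measurable_const.ite hG.measurableSet (measurable_const.prodMk hf)
  refine ⟨δ, hδ, g, hg, h_small g hg ?_, fun x y hxy hgxy => ?_⟩
  · refine (measureReal_mono (Set.compl_subset_compl.2 fun x hx => ?_)).trans hGt
    exact if_pos hx
  · grind

lemma exists_pos_forall_entropyRate_le_add [Fintype ι] {μ : Measure X} [IsProbabilityMeasure μ]
    [μ.InnerRegularCompactLTTop] {T : X → X} (hT : MeasurePreserving T μ μ) {f : X → ι}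
    (hf : Measurable f) {ε : ℝ} (hε : 0 < ε) :
    ∃ δ > 0, ∀ {κ : Type*} [Fintype κ] [MeasurableSpace κ] [MeasurableSingletonClass κ]
      {η : X → κ} (r w : ℕ), Measurable η →
      (∀ x y, itinerary T η w x = itinerary T η w y → dist (T^[r] x) (T^[r] y) < δ) →
      entropyRate μ T f ≤ entropyRate μ T η + ε := by
  obtain ⟨δ, hδ, g, hg, hgε, h_eq⟩ := exists_entropy_le_and_forall_dist_lt_imp_eq μ hf hε
  refine ⟨δ, hδ, fun {κ} _ _ _ {η} r w hη h_sep =>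
    le_of_forall_gt_imp_ge_of_dense fun L hL => ?_⟩
  obtain ⟨C, hC⟩ := exists_forall_entropy_itinerary_le hT hη (lt_sub_iff_add_lt.2 hL)
  refine le_of_forall_nat_mul_le_add (c := w * (L - ε) + C) fun n hn => ?_
  have h_rate := entropyRate_le_div (μ := μ) (T := T) (f := f) hn
  rw [le_div_iff₀' (by positivity)] at h_rate
  calc n * entropyRate μ T f ≤ entropy μ (itinerary T f n) := h_rate
    _ ≤ entropy μ (itinerary T g n) + entropy μ (itinerary T η (n + w)) :=
        entropy_itinerary_le_add hT hf hη hg (fun x y hη_eq => h_eq _ _ (h_sep x y hη_eq)) n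
    _ ≤ n * ε + (↑(n + w) * (L - ε) + C) := by
        gcongr
        · exact (entropy_itinerary_le_mul hT hg n).trans (by gcongr)
        · exact hC _
    _ = n * L + (w * (L - ε) + C) := by push_cast; ring

end Generator

section Torus

variable {N : ℕ} {A B : Matrix (Fin N) (Fin N) ℤ}

instance : IsProbabilityMeasure (volume : Measure UnitAddCircle) :=
  ⟨by simp [AddCircle.measure_univ]⟩

instance : IsProbabilityMeasure (volume : Measure (UnitAddTorus (Fin N))) := by
  rw [volume_pi]
  infer_instance

/-- The covering homomorphism `ℝ^N → 𝕋^N`. -/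
def torusProj (N : ℕ) : (Fin N → ℝ) →+ UnitAddTorus (Fin N) :=
  (QuotientAddGroup.mk' (AddSubgroup.zmultiples (1 : ℝ))).compLeft (Fin N)

lemma torusProj_apply (u : Fin N → ℝ) (i : Fin N) : torusProj N u i = (u i : UnitAddCircle) :=
  rfl

lemma continuous_torusProj : Continuous (torusProj N) :=
  continuous_pi fun i => (AddCircle.continuous_mk' 1).comp (continuous_apply i)

lemma norm_torusProj_le (u : Fin N → ℝ) : ‖torusProj N u‖ ≤ ‖u‖ :=
  (pi_norm_le_iff_of_nonneg (norm_nonneg u)).2 fun i =>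
    QuotientAddGroup.norm_mk_le_norm.trans (norm_le_pi_norm u i)

lemma torusProj_eq_zero_iff {u : Fin N → ℝ} :
    torusProj N u = 0 ↔ ∃ z : Fin N → ℤ, u = fun i => (z i : ℝ) := by
  simp only [funext_iff, torusProj_apply, Pi.zero_apply, AddCircle.coe_eq_zero_iff, zsmul_eq_mul,
    mul_one, eq_comm (b := u _)]
  exact Classical.skolem

lemma exists_torusProj_eq_and_norm_le_one (x : UnitAddTorus (Fin N)) :
    ∃ u, torusProj N u = x ∧ ‖u‖ ≤ 1 := by
  choose t ht using fun i => QuotientAddGroup.mk_surjective (x i)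
  refine ⟨fun i => Int.fract (t i), funext fun i => ?_, ?_⟩
  · rw [torusProj_apply, ← Int.self_sub_floor, ← ht i, AddCircle.coe_sub, sub_eq_self,
      AddCircle.coe_eq_zero_iff]
    exact ⟨⌊t i⌋, by simp⟩
  · refine (pi_norm_le_iff_of_nonneg zero_le_one).2 fun i => ?_
    rw [Real.norm_of_nonneg (Int.fract_nonneg _)]
    exact (Int.fract_lt_one _).le

lemma torusProj_surjective : Function.Surjective (torusProj N) := fun x =>
  (exists_torusProj_eq_and_norm_le_one x).imp fun _ h => h.1

lemma toralMap_torusProj (A : Matrix (Fin N) (Fin N) ℤ) (u : Fin N → ℝ) :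
    toralMap A (torusProj N u) = torusProj N ((A.map (Int.cast : ℤ → ℝ)).mulVec u) := by
  funext i
  simp only [toralMap, torusProj_apply, Matrix.mulVec, dotProduct, Matrix.map_apply,
    ← AddCircle.coe_zsmul, zsmul_eq_mul]
  exact (map_sum (QuotientAddGroup.mk' (AddSubgroup.zmultiples (1 : ℝ))) _ _).symm

/-- `toralMap A` as a group homomorphism. -/
noncomputable def toralHom (A : Matrix (Fin N) (Fin N) ℤ) :
    UnitAddTorus (Fin N) →+ UnitAddTorus (Fin N) :=
  AddMonoidHom.mk' (toralMap A) fun x y => by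
    funext i
    simp [toralMap, Finset.sum_add_distrib]

lemma continuous_toralMap (A : Matrix (Fin N) (Fin N) ℤ) : Continuous (toralMap A) :=
  continuous_pi fun _ => continuous_finsetSum _ fun j _ => (continuous_apply j).zsmul _

lemma iterate_toralMap_sub (A : Matrix (Fin N) (Fin N) ℤ) (n : ℕ) (x y : UnitAddTorus (Fin N)) :
    (toralMap A)^[n] (x - y) = (toralMap A)^[n] x - (toralMap A)^[n] y :=
  iterate_map_sub (toralHom A) n x y

lemma toralMap_mul (A B : Matrix (Fin N) (Fin N) ℤ) :
    toralMap (A * B) = toralMap A ∘ toralMap B := by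
  funext x i
  simp only [toralMap, Function.comp_apply, Matrix.mul_apply, Finset.sum_smul, Finset.smul_sum,
    mul_smul]
  exact Finset.sum_comm

lemma toralMap_one : toralMap (1 : Matrix (Fin N) (Fin N) ℤ) = id := by
  funext x i
  simp [toralMap, Matrix.one_apply]

lemma toralMap_pow (A : Matrix (Fin N) (Fin N) ℤ) (n : ℕ) :
    toralMap (A ^ n) = (toralMap A)^[n] := by
  induction n with
  | zero => rw [pow_zero, toralMap_one, Function.iterate_zero]
  | succ n ih => rw [pow_succ, toralMap_mul, ih, Function.iterate_succ]

lemma measurePreserving_toralMap (hA : A.det ≠ 0) :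
    MeasurePreserving (toralMap A) volume volume := by
  have hdet : IsUnit (A.map (Int.cast : ℤ → ℝ)).det := by
    rw [← Int.cast_det, isUnit_iff_ne_zero]
    exact_mod_cast hA
  have hsurj : Function.Surjective (toralHom A) := by
    intro x
    obtain ⟨u, rfl⟩ := torusProj_surjective x
    refine ⟨torusProj N ((A.map (Int.cast : ℤ → ℝ))⁻¹.mulVec u), ?_⟩
    refine (toralMap_torusProj A _).trans ?_
    rw [Matrix.mulVec_mulVec, Matrix.mul_nonsing_inv _ hdet, Matrix.one_mulVec]
  exact AddMonoidHom.measurePreserving (f := toralHom A) (continuous_toralMap A) hsurj rfl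

end Torus

section Boxes

variable {N : ℕ} {ι : Type*} {φ : ι → (Fin N → ℝ) →ₗ[ℝ] ℂ} {ρ ρ' : ι → ℝ}
  {x y : UnitAddTorus (Fin N)}

/-- The image in the torus of the polydisc of polyradius `ρ` in the coordinates `φ`. -/
def box (φ : ι → (Fin N → ℝ) →ₗ[ℝ] ℂ) (ρ : ι → ℝ) : Set (UnitAddTorus (Fin N)) :=
  torusProj N '' {u | ∀ i, ‖φ i u‖ ≤ ρ i}

lemma box_mono (h : ρ ≤ ρ') : box φ ρ ⊆ box φ ρ' :=
  Set.image_mono fun _ hu i => (hu i).trans (h i)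

lemma zero_mem_box (hρ : 0 ≤ ρ) : 0 ∈ box φ ρ :=
  ⟨0, fun i => by simpa using hρ i, map_zero _⟩

lemma sub_mem_box (hx : x ∈ box φ ρ) (hy : y ∈ box φ ρ') : x - y ∈ box φ (ρ + ρ') := by
  obtain ⟨u, hu, rfl⟩ := hx
  obtain ⟨v, hv, rfl⟩ := hy
  refine ⟨u - v, fun i => ?_, map_sub _ _ _⟩
  rw [map_sub]
  exact (norm_sub_le _ _).trans (add_le_add (hu i) (hv i))

lemma sub_mem_box_comm : x - y ∈ box φ ρ ↔ y - x ∈ box φ ρ := by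
  suffices ∀ {z}, z ∈ box φ ρ → -z ∈ box φ ρ from
    ⟨fun h => neg_sub x y ▸ this h, fun h => neg_sub y x ▸ this h⟩
  rintro _ ⟨u, hu, rfl⟩
  exact ⟨-u, fun i => by rw [map_neg, norm_neg]; exact hu i, map_neg _ _⟩

lemma exists_forall_mem_box_smul [Finite ι] (φ : ι → (Fin N → ℝ) →ₗ[ℝ] ℂ) (hρ : ∀ i, 0 < ρ i) :
    ∃ r : ℝ, ∀ x, x ∈ box φ (r • ρ) := by
  cases nonempty_fintype ι
  let K : ι → ℝ := fun i => ‖(φ i).toContinuousLinearMap‖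
  have hK : ∀ i, 0 ≤ K i / ρ i := fun i => div_nonneg (norm_nonneg _) (hρ i).le
  refine ⟨∑ i, K i / ρ i, fun x => ?_⟩
  obtain ⟨u, rfl, hu⟩ := exists_torusProj_eq_and_norm_le_one x
  refine ⟨u, fun i => ?_, rfl⟩
  calc ‖φ i u‖ ≤ K i * ‖u‖ := (φ i).toContinuousLinearMap.le_opNorm u
    _ ≤ K i := mul_le_of_le_one_right (norm_nonneg _) hu
    _ = K i / ρ i * ρ i := (div_mul_cancel₀ _ (hρ i).ne').symm
    _ ≤ (∑ i, K i / ρ i) * ρ i := mul_le_mul_of_nonneg_right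
      (Finset.single_le_sum (f := fun i => K i / ρ i) (fun i _ => hK i) (Finset.mem_univ i))
      (hρ i).le

/-- Linear functionals on `ℝ^N` that separate points and whose product is bounded away from zero
on the nonzero lattice points. -/
structure IsAdmissible [Fintype ι] (φ : ι → (Fin N → ℝ) →ₗ[ℝ] ℂ) : Prop where
  eq_zero_of_forall : ∀ u, (∀ i, φ i u = 0) → u = 0
  exists_le_prod : ∃ c > 0, ∀ z : Fin N → ℤ, z ≠ 0 → c ≤ ∏ i, ‖φ i fun j => (z j : ℝ)‖

variable [Fintype ι]

lemma IsAdmissible.exists_norm_le (hφ : IsAdmissible φ) :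
    ∃ K > 0, ∀ u r, 0 ≤ r → (∀ i, ‖φ i u‖ ≤ r) → ‖u‖ ≤ K * r := by
  have hker : LinearMap.ker (LinearMap.pi φ) = ⊥ :=
    LinearMap.ker_eq_bot'.2 fun u hu => hφ.eq_zero_of_forall u (congrFun hu)
  obtain ⟨K, hK, hanti⟩ := LinearMap.exists_antilipschitzWith _ hker
  refine ⟨K, by exact_mod_cast hK, fun u r hr hu => (hanti.le_mul_norm (map_zero _) u).trans ?_⟩
  exact mul_le_mul_of_nonneg_left ((pi_norm_le_iff_of_nonneg hr).2 hu) K.2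

lemma IsAdmissible.isClosed_box (hφ : IsAdmissible φ) (ρ : ι → ℝ) : IsClosed (box φ ρ) := by
  obtain ⟨K, -, hle⟩ := hφ.exists_norm_le
  have hclosed : IsClosed {u | ∀ i, ‖φ i u‖ ≤ ρ i} := by
    simp only [Set.ofPred_forall]
    exact isClosed_iInter fun i => isClosed_le
      (φ i).continuous_of_finiteDimensional.norm continuous_const
  have hbounded : Bornology.IsBounded {u | ∀ i, ‖φ i u‖ ≤ ρ i} := by
    refine isBounded_iff_forall_norm_le.2 ⟨K * ‖ρ‖, fun u hu => hle u _ (norm_nonneg _) fun i => ?_⟩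
    exact (hu i).trans ((le_abs_self _).trans (norm_le_pi_norm ρ i))
  exact ((Metric.isCompact_of_isClosed_isBounded hclosed hbounded).image
    continuous_torusProj).isClosed

lemma IsAdmissible.exists_pos_dist_lt (hφ : IsAdmissible φ) {δ : ℝ} (hδ : 0 < δ) :
    ∃ r > 0, ∀ x y, x - y ∈ box φ (fun _ => r) → dist x y < δ := by
  obtain ⟨K, hK, hle⟩ := hφ.exists_norm_le
  refine ⟨δ / (2 * K), by positivity, ?_⟩
  rintro x y ⟨u, hu, hxy⟩
  calc dist x y = ‖torusProj N u‖ := by rw [dist_eq_norm, hxy]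
    _ ≤ ‖u‖ := norm_torusProj_le u
    _ ≤ K * (δ / (2 * K)) := hle u _ (by positivity) hu
    _ = δ / 2 := by field_simp
    _ < δ := half_lt_self hδ

end Boxes

section Nets

variable {N : ℕ} {ι : Type*} {φ : ι → (Fin N → ℝ) →ₗ[ℝ] ℂ} {ρ : ι → ℝ}
  {s : Finset (UnitAddTorus (Fin N))} {l : UnitAddTorus (Fin N) → s}

lemma exists_measurable_forall_mem {X κ : Type*} [MeasurableSpace X] [Countable κ]
    [MeasurableSpace κ] {t : κ → Set X} (ht : ∀ i, MeasurableSet (t i))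
    (hcover : ∀ x, ∃ i, x ∈ t i) :
    ∃ f : X → κ, Measurable f ∧ ∀ x, x ∈ t (f x) := by
  classical
  rcases isEmpty_or_nonempty X with hX | ⟨⟨x₀⟩⟩
  · exact ⟨isEmptyElim, measurable_of_empty _, isEmptyElim⟩
  have : Nonempty κ := (hcover x₀).nonempty
  obtain ⟨e, he⟩ := exists_surjective_nat κ
  have hex : ∀ x, ∃ n, x ∈ t (e n) := fun x => by simpa [he.exists] using hcover x
  exact ⟨fun x => e (Nat.find (hex x)),
    (measurable_from_nat (f := e)).comp (measurable_find hex fun n => ht (e n)),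
    fun x => Nat.find_spec (hex x)⟩

lemma measureReal_preimage_sub_right (y : UnitAddTorus (Fin N)) (S : Set (UnitAddTorus (Fin N))) :
    volume.real ((· - y) ⁻¹' S) = volume.real S := by
  simp only [measureReal_def, sub_eq_add_neg, measure_preimage_add_right]

/-- A maximal `ρ`-separated finite subset `s` of the torus, together with a measurable choice, for
each point of the torus, of a `ρ`-close element of `s`. The fibres of `l` are the partitions used
to estimate entropies. -/
structure IsNet (φ : ι → (Fin N → ℝ) →ₗ[ℝ] ℂ) (ρ : ι → ℝ) (s : Finset (UnitAddTorus (Fin N)))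
    (l : UnitAddTorus (Fin N) → s) : Prop where
  separated : (s : Set (UnitAddTorus (Fin N))).Pairwise fun x y => x - y ∉ box φ ρ
  measurable : Measurable l
  sub_mem : ∀ x, x - l x ∈ box φ ρ

lemma IsNet.sub_mem_box (h : IsNet φ ρ s l) {x y : UnitAddTorus (Fin N)} (hxy : l x = l y) :
    x - y ∈ box φ ((2 : ℝ) • ρ) := by
  rw [two_smul, ← sub_sub_sub_cancel_right x y (l x)]
  exact ToralEntropy.sub_mem_box (h.sub_mem x) (hxy ▸ h.sub_mem y)

/-- The largest size of a `1`-separated subset of the polydisc of polyradius `(r, …, r)` in `ℂ^ι`;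
it bounds the sizes of `ρ`-separated subsets of `box φ (r • ρ)` uniformly in `ρ`. -/
noncomputable def packingBound (ι : Type*) [Fintype ι] (r : ℝ) : ℕ :=
  (Metric.packingNumber 1 (Set.univ.pi fun _ : ι => Metric.closedBall (0 : ℂ) r)).toNat

lemma packingNumber_polydisc_ne_top [Fintype ι] (r : ℝ) :
    Metric.packingNumber 1 (Set.univ.pi fun _ : ι => Metric.closedBall (0 : ℂ) r) ≠ ⊤ := by
  obtain ⟨C, -, hfin, hcover⟩ := Metric.exists_finite_isCover_of_totallyBounded (ε := 2⁻¹)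
    (by simp) (isCompact_univ_pi fun _ : ι => isCompact_closedBall (0 : ℂ) r).totallyBounded
  have h := Metric.packingNumber_two_mul_le_externalCoveringNumber 2⁻¹
    (Set.univ.pi fun _ : ι => Metric.closedBall (0 : ℂ) r)
  rw [mul_inv_cancel₀ two_ne_zero] at h
  exact ne_top_of_le_ne_top hfin.encard_lt_top.ne
    (h.trans hcover.externalCoveringNumber_le_encard)

lemma card_le_packingBound [Fintype ι] (hρ : ∀ i, 0 < ρ i)
    (hs : (s : Set (UnitAddTorus (Fin N))).Pairwise fun x y => x - y ∉ box φ ρ)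
    (y : UnitAddTorus (Fin N)) {r : ℝ} (hr : ∀ x ∈ s, x - y ∈ box φ (r • ρ)) :
    s.card ≤ packingBound ι r := by
  choose! u hu hux using hr
  let g : UnitAddTorus (Fin N) → ι → ℂ := fun x i => φ i (u x) / ρ i
  have hsep : (s : Set (UnitAddTorus (Fin N))).Pairwise fun x x' => 1 < edist (g x) (g x') := by
    intro x hx x' hx' hne
    by_contra! hle
    rw [edist_dist, ENNReal.ofReal_le_one, dist_pi_le_iff zero_le_one] at hle
    refine hs hx hx' hne ⟨u x - u x', fun i => ?_, ?_⟩
    · have := hle i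
      rwa [dist_eq_norm, ← sub_div, ← map_sub, norm_div, Complex.norm_of_nonneg (hρ i).le,
        div_le_one (hρ i)] at this
    · rw [map_sub, hux x hx, hux x' hx', sub_sub_sub_cancel_right]
  have hinj : Set.InjOn g s := fun x hx x' hx' hxx' => by
    by_contra hne
    simpa [hxx'] using hsep hx hx' hne
  have hball : g '' s ⊆ Set.univ.pi fun _ => Metric.closedBall 0 r := by
    rintro _ ⟨x, hx, rfl⟩ i -
    rw [mem_closedBall_zero_iff, norm_div, Complex.norm_of_nonneg (hρ i).le, div_le_iff₀ (hρ i)]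
    exact hu x hx i
  have hcard := Metric.IsSeparated.encard_le_packingNumber (ε := 1) hball
    (by rintro _ ⟨x, hx, rfl⟩ _ ⟨x', hx', rfl⟩ hne
        exact hsep hx hx' fun h => hne (h ▸ rfl))
  rw [hinj.encard_image, Set.encard_coe_eq_coe_finsetCard] at hcard
  exact ENat.natCast_le_natCast.1
    (hcard.trans_eq (ENat.natCast_toNat (packingNumber_polydisc_ne_top r)).symm)

lemma exists_separated_forall_exists_sub_mem_box [Finite ι]
    (φ : ι → (Fin N → ℝ) →ₗ[ℝ] ℂ) (hρ : ∀ i, 0 < ρ i) :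
    ∃ s : Finset (UnitAddTorus (Fin N)),
      (s : Set (UnitAddTorus (Fin N))).Pairwise (fun x y => x - y ∉ box φ ρ) ∧
      ∀ x, ∃ y ∈ s, x - y ∈ box φ ρ := by
  classical
  cases nonempty_fintype ι
  obtain ⟨r, hr⟩ := exists_forall_mem_box_smul φ hρ
  have hfinite : {n | ∃ s : Finset (UnitAddTorus (Fin N)),
      (s : Set (UnitAddTorus (Fin N))).Pairwise (fun x y => x - y ∉ box φ ρ) ∧
        s.card = n}.Finite := by
    refine Set.finite_iff_bddAbove.2 ⟨packingBound ι r, ?_⟩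
    rintro _ ⟨s, hs, rfl⟩
    exact card_le_packingBound hρ hs 0 fun x _ => hr _
  obtain ⟨_, ⟨s, hs, rfl⟩, hmax⟩ := hfinite.exists_maximal ⟨0, ∅, by simp, rfl⟩
  refine ⟨s, hs, fun x => ?_⟩
  by_contra! hx
  have hxs : x ∉ s := fun h => hx x h (by
    rw [sub_self]
    exact zero_mem_box fun i => (hρ i).le)
  have hinsert : (insert x s : Set (UnitAddTorus (Fin N))).Pairwise fun x y => x - y ∉ box φ ρ :=
    Set.pairwise_insert.2
      ⟨hs, fun y hy _ => ⟨hx y hy, mt sub_mem_box_comm.1 (hx y hy)⟩⟩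
  have := hmax ⟨insert x s, by simpa using hinsert, rfl⟩ (Finset.card_le_card (s.subset_insert x))
  exact absurd (this.trans_lt' (Finset.card_lt_card (Finset.ssubset_insert hxs))) (lt_irrefl _)

variable [Fintype ι]

lemma IsAdmissible.exists_isNet (hφ : IsAdmissible φ) (hρ : ∀ i, 0 < ρ i) :
    ∃ (s : Finset (UnitAddTorus (Fin N))) (l : UnitAddTorus (Fin N) → s), IsNet φ ρ s l := by
  obtain ⟨s, hs, hcover⟩ := exists_separated_forall_exists_sub_mem_box φ hρ
  obtain ⟨l, hl, hmem⟩ := exists_measurable_forall_mem (κ := s)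
    (t := fun y => (· - (y : UnitAddTorus (Fin N))) ⁻¹' box φ ρ)
    (fun y => ((hφ.isClosed_box ρ).preimage (by fun_prop)).measurableSet)
    fun x => let ⟨y, hy, hxy⟩ := hcover x; ⟨⟨y, hy⟩, hxy⟩
  exact ⟨s, l, hs, hl, hmem⟩

namespace IsNet

lemma exists_card_le_packingBound (h : IsNet φ ρ s l) (hρ : ∀ i, 0 < ρ i) (r : ℝ)
    (y : UnitAddTorus (Fin N)) :
    ∃ J : Finset s, J.card ≤ packingBound ι (r + 1) ∧ ∀ x, x - y ∈ box φ (r • ρ) → l x ∈ J := by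
  classical
  refine ⟨Finset.univ.filter fun z => (z : UnitAddTorus (Fin N)) - y ∈ box φ ((r + 1) • ρ),
    ?_, fun x hx => ?_⟩
  · rw [← Finset.card_map (Function.Embedding.subtype _)]
    refine card_le_packingBound hρ (h.separated.mono ?_) y ?_
    · intro z hz
      obtain ⟨w, -, rfl⟩ := Finset.mem_map.1 hz
      exact w.2
    · intro z hz
      obtain ⟨w, hw, rfl⟩ := Finset.mem_map.1 hz
      exact (Finset.mem_filter.1 hw).2
  · rw [Finset.mem_filter_univ, add_smul, one_smul, ← sub_sub_sub_cancel_left _ _ x]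
    exact ToralEntropy.sub_mem_box hx (h.sub_mem x)

end IsNet

lemma IsAdmissible.volume_box_smul_le (hφ : IsAdmissible φ) (hρ : ∀ i, 0 < ρ i) (r : ℝ) :
    volume.real (box φ (r • ρ)) ≤ packingBound ι (r + 1) * volume.real (box φ ρ) := by
  obtain ⟨s, l, hl⟩ := hφ.exists_isNet hρ
  obtain ⟨J, hJ, hmem⟩ := hl.exists_card_le_packingBound hρ r 0
  have hsub : box φ (r • ρ) ⊆ ⋃ z ∈ J, (· - (z : UnitAddTorus (Fin N))) ⁻¹' box φ ρ := fun x hx =>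
    Set.mem_biUnion (hmem x (by rwa [sub_zero])) (hl.sub_mem x)
  calc volume.real (box φ (r • ρ))
      ≤ ∑ z ∈ J, volume.real ((· - (z : UnitAddTorus (Fin N))) ⁻¹' box φ ρ) :=
        (measureReal_mono hsub (measure_ne_top _ _)).trans (measureReal_biUnion_finset_le J _)
    _ = J.card * volume.real (box φ ρ) := by
        simp only [measureReal_preimage_sub_right, Finset.sum_const, nsmul_eq_mul]
    _ ≤ packingBound ι (r + 1) * volume.real (box φ ρ) := by gcongr

lemma IsNet.card_mul_volume_box_le_one (h : IsNet φ ρ s l) (hφ : IsAdmissible φ) :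
    s.card * volume.real (box φ ((2⁻¹ : ℝ) • ρ)) ≤ 1 := by
  have hdisj : (s : Set (UnitAddTorus (Fin N))).PairwiseDisjoint
      fun y => (· - y) ⁻¹' box φ ((2⁻¹ : ℝ) • ρ) := by
    refine fun y hy z hz hne => Set.disjoint_left.2 fun x hxy hxz => h.separated hz hy hne.symm ?_
    have hρ : (2⁻¹ : ℝ) • ρ + (2⁻¹ : ℝ) • ρ = ρ := by
      rw [← add_smul, ← two_mul, mul_inv_cancel₀ two_ne_zero, one_smul]
    rw [← sub_sub_sub_cancel_left y z x]
    exact hρ ▸ ToralEntropy.sub_mem_box hxy hxz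
  have hmeas : ∀ y ∈ s, MeasurableSet ((· - y) ⁻¹' box φ ((2⁻¹ : ℝ) • ρ)) := fun y _ =>
    ((hφ.isClosed_box _).preimage (by fun_prop)).measurableSet
  calc s.card * volume.real (box φ ((2⁻¹ : ℝ) • ρ))
      = ∑ y ∈ s, volume.real ((· - y) ⁻¹' box φ ((2⁻¹ : ℝ) • ρ)) := by
        simp only [measureReal_preimage_sub_right, Finset.sum_const, nsmul_eq_mul]
    _ = volume.real (⋃ y ∈ s, (· - y) ⁻¹' box φ ((2⁻¹ : ℝ) • ρ)) :=
        (measureReal_biUnion_finset hdisj hmeas).symm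
    _ ≤ 1 := measureReal_le_one

end Nets

section Orbits

variable {N : ℕ} {ι : Type*} {φ : ι → (Fin N → ℝ) →ₗ[ℝ] ℂ} {A : Matrix (Fin N) (Fin N) ℤ}
  {a γ ρ : ι → ℝ} {x : UnitAddTorus (Fin N)} {n s : ℕ} {t : ℝ}

lemma exp_nat_mul_posLog (n : ℕ) {r : ℝ} (hr : 0 ≤ r) :
    Real.exp (n * log⁺ r) = max 1 (r ^ n) := by
  rw [← Real.posLog_pow, Real.posLog_eq_log_max_one (pow_nonneg hr n),
    Real.exp_log (zero_lt_one.trans_le (le_max_left _ _))]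

/-- Each `φ i` behaves like an eigenfunctional of the matrix `A`, with an eigenvalue of absolute
value `a i > 0`. -/
structure Scales (φ : ι → (Fin N → ℝ) →ₗ[ℝ] ℂ) (A : Matrix (Fin N) (Fin N) ℤ) (a : ι → ℝ) :
    Prop where
  pos : ∀ i, 0 < a i
  norm_apply : ∀ i u, ‖φ i ((A.map (Int.cast : ℤ → ℝ)).mulVec u)‖ = a i * ‖φ i u‖

namespace Scales

lemma pow (h : Scales φ A a) (n : ℕ) : Scales φ (A ^ n) (a ^ n) := by
  refine ⟨fun i => pow_pos (h.pos i) n, fun i => ?_⟩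
  induction n with
  | zero =>
    simp [Matrix.map_one (Int.cast : ℤ → ℝ) Int.cast_zero Int.cast_one]
  | succ n ih =>
    intro u
    have hmap : (A ^ n * A).map (Int.cast : ℤ → ℝ) =
        (A ^ n).map (Int.cast : ℤ → ℝ) * A.map (Int.cast : ℤ → ℝ) :=
      Matrix.map_mul (f := Int.castRingHom ℝ)
    rw [pow_succ, hmap, ← Matrix.mulVec_mulVec, ih, h.norm_apply, pow_succ a, Pi.mul_apply,
      mul_assoc]

lemma iterate_mem_box (h : Scales φ A a) (n : ℕ) (hx : x ∈ box φ ρ) :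
    (toralMap A)^[n] x ∈ box φ (a ^ n * ρ) := by
  obtain ⟨u, hu, rfl⟩ := hx
  rw [← toralMap_pow, toralMap_torusProj]
  refine ⟨_, fun i => ?_, rfl⟩
  rw [(h.pow n).norm_apply]
  exact mul_le_mul_of_nonneg_left (hu i) ((h.pow n).pos i).le

variable [Fintype ι]

-- The lifts to `ℝ^N` of successive points of the orbit, chosen in the polydisc of polyradius `ρ`,
-- match up: their discrepancy is a lattice point on which `∏ i, ‖φ i z‖` is too small.
lemma exists_torusProj_eq_of_iterate_mem_box (h : Scales φ A a)
    (hρ : ∀ z : Fin N → ℤ, z ≠ 0 → ∏ i, ρ i * (a i + 1) < ∏ i, ‖φ i fun j => (z j : ℝ)‖)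
    (hx : ∀ j ≤ n, (toralMap A)^[j] x ∈ box φ ρ) :
    ∃ u, torusProj N u = x ∧ ∀ j ≤ n, ∀ i, a i ^ j * ‖φ i u‖ ≤ ρ i := by
  induction n with
  | zero =>
    obtain ⟨u, hu, hux⟩ := hx 0 le_rfl
    exact ⟨u, hux, fun j hj i => by simpa [Nat.le_zero.1 hj] using hu i⟩
  | succ n ih =>
    obtain ⟨u, hux, hu⟩ := ih fun j hj => hx j (hj.trans n.le_succ)
    obtain ⟨w, hw, hwx⟩ := hx (n + 1) le_rfl
    let v := ((A ^ (n + 1)).map (Int.cast : ℤ → ℝ)).mulVec u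
    have hv : ∀ i, ‖φ i v‖ = a i ^ (n + 1) * ‖φ i u‖ := fun i => (h.pow (n + 1)).norm_apply i u
    have hwv : torusProj N (w - v) = 0 := by
      rw [map_sub, hwx, ← toralMap_torusProj, hux, toralMap_pow, sub_self]
    obtain ⟨z, hz⟩ := torusProj_eq_zero_iff.1 hwv
    have hz0 : z = 0 := by
      by_contra hne
      refine (hρ z hne).not_ge (Finset.prod_le_prod (fun i _ => norm_nonneg _) fun i _ => ?_)
      calc ‖φ i fun j => (z j : ℝ)‖ ≤ ‖φ i w‖ + a i * (a i ^ n * ‖φ i u‖) := by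
            rw [← hz, map_sub, ← mul_assoc, ← pow_succ', ← hv]
            exact norm_sub_le _ _
        _ ≤ ρ i + a i * ρ i :=
            add_le_add (hw i) (mul_le_mul_of_nonneg_left (hu n le_rfl i) (h.pos i).le)
        _ = ρ i * (a i + 1) := by ring
    have hwv : w = v := by
      rw [← sub_eq_zero, hz, hz0]
      simp [Pi.zero_def]
    refine ⟨u, hux, fun j hj i => ?_⟩
    rcases hj.lt_or_eq with hj | rfl
    · exact hu j (Nat.lt_succ_iff.1 hj) i
    · rw [← hv, ← hwv]
      exact hw i

lemma mem_box_of_iterate_mem_box (h : Scales φ A a)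
    (ht : ∀ z : Fin N → ℤ, z ≠ 0 → ∏ i, t * (a i + 1) < ∏ i, ‖φ i fun j => (z j : ℝ)‖)
    (hx : ∀ j ≤ n, (toralMap A)^[j] x ∈ box φ fun _ => t) :
    x ∈ box φ (t • fun i => Real.exp (-(n * log⁺ (a i)))) := by
  obtain ⟨u, hux, hu⟩ := h.exists_torusProj_eq_of_iterate_mem_box ht hx
  refine ⟨u, fun i => ?_, hux⟩
  rw [Pi.smul_apply, smul_eq_mul, Real.exp_neg, ← div_eq_mul_inv, le_div_iff₀' (Real.exp_pos _),
    exp_nat_mul_posLog n (h.pos i).le, max_mul_of_nonneg _ _ (norm_nonneg _)]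
  exact max_le (by simpa using hu 0 n.zero_le i) (hu n le_rfl i)

lemma iterate_mem_box_of_iterate_mem_box (h : Scales φ A a) (hγ : 0 ≤ γ)
    (hsum : ∑ i, log⁺ (a i) ≤ ∑ i, γ i) (ht : 0 ≤ t)
    (hsmall : ∀ z : Fin N → ℤ, z ≠ 0 → ∏ i, t * (a i + 1) < ∏ i, ‖φ i fun j => (z j : ℝ)‖)
    (hx : ∀ j ≤ 2 * s, (toralMap A)^[j] x ∈
      box φ (t • fun i => Real.exp (s * (log⁺ (a i) - γ i)))) :
    (toralMap A)^[s] x ∈ box φ fun _ => t := by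
  have hprod : ∏ i, (t • fun i => Real.exp (s * (log⁺ (a i) - γ i))) i * (a i + 1) ≤
      ∏ i, t * (a i + 1) := by
    simp only [Pi.smul_apply, smul_eq_mul, mul_right_comm t, Finset.prod_mul_distrib (f := fun _ =>
      t * _), ← Real.exp_sum, ← Finset.mul_sum, Finset.sum_sub_distrib]
    refine mul_le_of_le_one_right
      (Finset.prod_nonneg fun i _ => mul_nonneg ht (add_pos (h.pos i) one_pos).le) ?_
    exact Real.exp_le_one_iff.2 (mul_nonpos_of_nonneg_of_nonpos s.cast_nonneg (sub_nonpos.2 hsum))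
  obtain ⟨u, rfl, hu⟩ := h.exists_torusProj_eq_of_iterate_mem_box
    (fun z hz => hprod.trans_lt (hsmall z hz)) hx
  rw [← toralMap_pow, toralMap_torusProj]
  refine ⟨_, fun i => ?_, rfl⟩
  rw [(h.pow s).norm_apply, Pi.pow_apply]
  refine le_of_mul_le_mul_left ?_ (Real.exp_pos (s * log⁺ (a i)))
  calc Real.exp (s * log⁺ (a i)) * (a i ^ s * ‖φ i u‖)
      = max (a i ^ s * ‖φ i u‖) (a i ^ (2 * s) * ‖φ i u‖) := by
        have := (h.pow s).pos i
        rw [exp_nat_mul_posLog s (h.pos i).le, max_mul_of_nonneg _ _ (by positivity), one_mul,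
          two_mul, pow_add, mul_assoc]
    _ ≤ t * Real.exp (s * (log⁺ (a i) - γ i)) := max_le (hu s (by lia) i) (hu (2 * s) le_rfl i)
    _ ≤ t * Real.exp (s * log⁺ (a i)) := by
        gcongr
        exact sub_le_self _ (hγ i)
    _ = Real.exp (s * log⁺ (a i)) * t := mul_comm _ _

end Scales

end Orbits

section Comparison

variable {N : ℕ} {ι : Type*} [Fintype ι] {φ : ι → (Fin N → ℝ) →ₗ[ℝ] ℂ}
  {A B : Matrix (Fin N) (Fin N) ℤ} {a b γ ρ : ι → ℝ} {μ ν : Measure (UnitAddTorus (Fin N))}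
  [IsProbabilityMeasure μ] [IsProbabilityMeasure ν]

lemma IsAdmissible.eventually_prod_lt [Nonempty ι] (hφ : IsAdmissible φ) (q : ι → ℝ) :
    ∀ᶠ t : ℝ in nhdsWithin 0 (Set.Ioi 0), ∀ z : Fin N → ℤ, z ≠ 0 →
      ∏ i, t * q i < ∏ i, ‖φ i fun j => (z j : ℝ)‖ := by
  obtain ⟨c, hc, hle⟩ := hφ.exists_le_prod
  have hcont : Continuous fun t : ℝ => ∏ i, t * q i := by fun_prop
  have hlim := (hcont.tendsto 0).eventually_lt_const (u := c) (by simpa using hc)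
  filter_upwards [hlim.filter_mono nhdsWithin_le_nhds] with t ht z hz using ht.trans_le (hle z hz)

lemma IsAdmissible.exists_pos_prod_lt_and_dist_lt [Nonempty ι] (hφ : IsAdmissible φ) (q : ι → ℝ)
    {δ : ℝ} (hδ : 0 < δ) :
    ∃ t > 0, (∀ z : Fin N → ℤ, z ≠ 0 → ∏ i, t * q i < ∏ i, ‖φ i fun j => (z j : ℝ)‖) ∧
      ∀ x y, x - y ∈ box φ (fun _ => t) → dist x y < δ := by
  obtain ⟨r, hr, hdist⟩ := hφ.exists_pos_dist_lt hδ
  obtain ⟨t, hprod, ht⟩ := ((hφ.eventually_prod_lt q).and (Ioc_mem_nhdsGT hr)).exists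
  exact ⟨t, ht.1, hprod, fun x y hxy => hdist x y (box_mono (fun _ => ht.2) hxy)⟩

namespace IsNet

variable {s s' : Finset (UnitAddTorus (Fin N))} {l : UnitAddTorus (Fin N) → s}
  {l' : UnitAddTorus (Fin N) → s'} {t : ℝ} {n : ℕ}

lemma entropy_itinerary_le (h : Scales φ A a) (ht : 0 < t)
    (hl : IsNet φ (t • fun i => Real.exp (-(n * γ i))) s l)
    (hl' : IsNet φ (t • fun i => Real.exp (n * (log⁺ (a i) - γ i))) s' l') :
    entropy μ (itinerary (toralMap A) l' n) ≤ entropy μ l + n * Real.log (packingBound ι 3) := by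
  have hpos : ∀ i, 0 < (t • fun i => Real.exp (n * (log⁺ (a i) - γ i))) i := fun i =>
    smul_pos ht (Real.exp_pos _)
  have hmem : ∀ j ≤ n, ∀ x y, l x = l y → (toralMap A)^[j] x - (toralMap A)^[j] y ∈
      box φ ((2 : ℝ) • t • fun i => Real.exp (n * (log⁺ (a i) - γ i))) := by
    intro j hj x y hxy
    rw [← iterate_toralMap_sub]
    refine box_mono (fun i => ?_) (h.iterate_mem_box j (hl.sub_mem_box hxy))
    have hj : a i ^ j ≤ Real.exp (n * log⁺ (a i)) := calc
      a i ^ j ≤ Real.exp (j * log⁺ (a i)) :=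
        (le_max_right _ _).trans_eq (exp_nat_mul_posLog j (h.pos i).le).symm
      _ ≤ Real.exp (n * log⁺ (a i)) := by gcongr; exact Real.posLog_nonneg
    calc a i ^ j * (2 * (t * Real.exp (-(n * γ i))))
        ≤ Real.exp (n * log⁺ (a i)) * (2 * (t * Real.exp (-(n * γ i)))) := by gcongr
      _ = 2 * (t * Real.exp (n * (log⁺ (a i) - γ i))) := by
          rw [mul_sub, sub_eq_add_neg, Real.exp_add]
          ring
  refine entropy_itinerary_le_entropy_add_mul_log (continuous_toralMap A).measurable hl'.measurable
    hl.measurable n fun j hj y => ?_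
  obtain ⟨J, hcard, hJ⟩ := hl'.exists_card_le_packingBound hpos 2 ((toralMap A)^[j] y)
  rw [show (2 : ℝ) + 1 = 3 by norm_num] at hcard
  exact ⟨J, hcard, fun x hxy => hJ _ (hmem j hj.le x y hxy)⟩

lemma dist_iterate_lt (h : Scales φ A a) (hγ : 0 ≤ γ) (hsum : ∑ i, log⁺ (a i) ≤ ∑ i, γ i)
    (ht : 0 < t)
    (hsmall : ∀ z : Fin N → ℤ, z ≠ 0 → ∏ i, t * (a i + 1) < ∏ i, ‖φ i fun j => (z j : ℝ)‖)
    {δ : ℝ} (hδ : ∀ x y, x - y ∈ box φ (fun _ => t) → dist x y < δ)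
    (hl : IsNet φ ((t / 2) • fun i => Real.exp (n * (log⁺ (a i) - γ i))) s l)
    {x y : UnitAddTorus (Fin N)}
    (hxy : itinerary (toralMap A) l (2 * n + 1) x = itinerary (toralMap A) l (2 * n + 1) y) :
    dist ((toralMap A)^[n] x) ((toralMap A)^[n] y) < δ := by
  refine hδ _ _ ?_
  rw [← iterate_toralMap_sub]
  refine h.iterate_mem_box_of_iterate_mem_box hγ hsum ht.le hsmall fun j hj => ?_
  rw [iterate_toralMap_sub]
  have := hl.sub_mem_box (itinerary_eq_iff.1 hxy j (Nat.lt_succ_of_le hj))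
  rwa [smul_smul, mul_div_cancel₀ _ two_ne_zero] at this

end IsNet

lemma Scales.entropyRate_le [Nonempty ι] (h : Scales φ A a) (hφ : IsAdmissible φ)
    (hA : MeasurePreserving (toralMap A) μ μ) (hγ : 0 ≤ γ)
    (hsum : ∑ i, log⁺ (a i) ≤ ∑ i, γ i) {L : ℝ}
    (hL : ∀ t > (0 : ℝ), ∃ C, ∀ n : ℕ, ∀ (s : Finset (UnitAddTorus (Fin N))) (l : _ → s),
      IsNet φ (t • fun i => Real.exp (-(n * γ i))) s l → entropy μ l ≤ n * L + C)
    {κ : Type*} [Fintype κ] [MeasurableSpace κ] [MeasurableSingletonClass κ]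
    {f : UnitAddTorus (Fin N) → κ} (hf : Measurable f) :
    entropyRate μ (toralMap A) f ≤ L := by
  -- The error terms are bounded for each power of `A`, so passing to `A ^ M` divides them by `M`.
  refine le_of_forall_nat_mul_le_add (c := Real.log (packingBound ι 3) + 1) fun M _ => ?_
  have hU : MeasurePreserving (toralMap (A ^ M)) μ μ := toralMap_pow A M ▸ hA.iterate M
  have hF := measurable_itinerary hA.measurable hf M
  have hsumM : ∑ i, log⁺ ((a ^ M) i) ≤ ∑ i, (M • γ) i := by
    simpa [← Finset.mul_sum] using mul_le_mul_of_nonneg_left hsum M.cast_nonneg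
  have hrate : M * entropyRate μ (toralMap A) f ≤
      entropyRate μ (toralMap (A ^ M)) (itinerary (toralMap A) f M) :=
    toralMap_pow A M ▸ mul_entropyRate_le_entropyRate_iterate hA.measurable hf M
  obtain ⟨δ, hδ, hgen⟩ := exists_pos_forall_entropyRate_le_add hU hF one_pos
  obtain ⟨t, ht, hsmall, hdist⟩ :=
    hφ.exists_pos_prod_lt_and_dist_lt (fun i => (a ^ M) i + 1) hδ
  obtain ⟨C, hC⟩ := hL (t / 2) (half_pos ht)
  refine le_of_forall_nat_mul_le_add (c := C) fun n hn => ?_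
  obtain ⟨s, l, hl⟩ := hφ.exists_isNet (ρ := (t / 2) • fun i => Real.exp (-(n * (M • γ) i)))
    fun i => smul_pos (half_pos ht) (Real.exp_pos _)
  -- Points of one cell of `l` visit boundedly many cells of `l'` at each time up to `n`, while
  -- `hsumM` makes the cells of `l'` small enough in volume for its itineraries to separate points.
  obtain ⟨s', l', hl'⟩ := hφ.exists_isNet
    (ρ := (t / 2) • fun i => Real.exp (n * (log⁺ ((a ^ M) i) - (M • γ) i)))
    fun i => smul_pos (half_pos ht) (Real.exp_pos _)
  have hle : entropyRate μ (toralMap (A ^ M)) (itinerary (toralMap A) f M) ≤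
      entropyRate μ (toralMap (A ^ M)) l' + 1 :=
    hgen n (2 * n + 1) hl'.measurable fun x y hxy =>
      hl'.dist_iterate_lt (h.pow M) (nsmul_nonneg hγ M) hsumM ht hsmall hdist hxy
  have hl'_rate := entropyRate_le_div (μ := μ) (T := toralMap (A ^ M)) (f := l') hn
  rw [le_div_iff₀ (by positivity)] at hl'_rate
  have hl_entropy := hC (n * M) s l (by simpa [mul_assoc] using hl)
  push_cast at hl_entropy
  calc n * (M * entropyRate μ (toralMap A) f)
      ≤ n * (entropyRate μ (toralMap (A ^ M)) l' + 1) := by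
        gcongr
        exact hrate.trans hle
    _ ≤ entropy μ l + n * Real.log (packingBound ι 3) + n := by
        linarith [hl.entropy_itinerary_le (μ := μ) (h.pow M) (half_pos ht) hl']
    _ ≤ n * (M * L + (Real.log (packingBound ι 3) + 1)) + C := by linarith

end Comparison

section Domination

variable {N : ℕ} {ι : Type*} {φ : ι → (Fin N → ℝ) →ₗ[ℝ] ℂ}
  {A B : Matrix (Fin N) (Fin N) ℤ} {a b : ι → ℝ} {μ ν : Measure (UnitAddTorus (Fin N))}

/-- Up to a bounded error, the `μ`-entropy of a net is at most the `ν`-entropy of any finite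
partition into sets which are small at the scale of the net. The error may depend on the relative
size `R` of these sets, but not on the scale `ρ`. -/
def EntropyDominated (φ : ι → (Fin N → ℝ) →ₗ[ℝ] ℂ) (μ ν : Measure (UnitAddTorus (Fin N))) :
    Prop :=
  ∀ R : ℝ, ∃ C : ℝ, ∀ (ρ : ι → ℝ) (s : Finset (UnitAddTorus (Fin N))) (l : _ → s),
    (∀ i, 0 < ρ i) → IsNet φ ρ s l → ∀ {κ : Type} [Fintype κ] [MeasurableSpace κ]
      [MeasurableSingletonClass κ] {f : UnitAddTorus (Fin N) → κ}, Measurable f →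
      (∀ x y, f x = f y → x - y ∈ box φ (R • ρ)) → entropy μ l ≤ entropy ν f + C

lemma entropyDominated_self [Finite ι] [IsProbabilityMeasure μ] : EntropyDominated φ μ μ := by
  cases nonempty_fintype ι
  exact fun R => ⟨Real.log (packingBound ι (R + 1)), fun _ _ _ hρ hl _ _ _ _ _ hf hclose =>
    entropy_le_entropy_add_log hl.measurable hf fun y =>
      let ⟨J, hcard, hJ⟩ := hl.exists_card_le_packingBound hρ R y
      ⟨J, hcard, fun x hxy => hJ x (hclose x y hxy)⟩⟩

variable [Fintype ι]

lemma IsNet.volume_fiber_le (hφ : IsAdmissible φ) {ρ : ι → ℝ} (hρ : ∀ i, 0 < ρ i)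
    {s : Finset (UnitAddTorus (Fin N))} {l : UnitAddTorus (Fin N) → s} (hl : IsNet φ ρ s l)
    {κ : Type*} {f : UnitAddTorus (Fin N) → κ} {R : ℝ}
    (hf : ∀ x y, f x = f y → x - y ∈ box φ (R • ρ)) (i : κ) :
    volume.real (f ⁻¹' {i}) ≤ packingBound ι (2 * R + 1) / s.card := by
  rcases (f ⁻¹' {i}).eq_empty_or_nonempty with hi | ⟨y, hy⟩
  · rw [hi, measureReal_empty]
    positivity
  have hcard : (0 : ℝ) < s.card := by exact_mod_cast Finset.card_pos.2 ⟨_, (l 0).2⟩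
  have hsub : f ⁻¹' {i} ⊆ (· - y) ⁻¹' box φ (R • ρ) := fun x hx => hf x y (Eq.trans hx (Eq.symm hy))
  have hρ2 : R • ρ = (2 * R) • (2⁻¹ : ℝ) • ρ := by
    rw [smul_smul, mul_right_comm, mul_inv_cancel₀ two_ne_zero, one_mul]
  have hpos : ∀ i, 0 < ((2⁻¹ : ℝ) • ρ) i := fun i => mul_pos (inv_pos.2 two_pos) (hρ i)
  calc volume.real (f ⁻¹' {i})
      ≤ volume.real (box φ ((2 * R) • (2⁻¹ : ℝ) • ρ)) := by
        rw [← hρ2]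
        exact (measureReal_mono hsub).trans_eq (measureReal_preimage_sub_right y _)
    _ ≤ packingBound ι (2 * R + 1) * volume.real (box φ ((2⁻¹ : ℝ) • ρ)) :=
        hφ.volume_box_smul_le hpos (2 * R)
    _ ≤ packingBound ι (2 * R + 1) * (1 / s.card) := by
        gcongr
        rw [le_div_iff₀' hcard]
        exact hl.card_mul_volume_box_le_one hφ
    _ = packingBound ι (2 * R + 1) / s.card := mul_one_div _ _

lemma IsAdmissible.entropyDominated_volume [IsProbabilityMeasure μ] (hφ : IsAdmissible φ) :
    EntropyDominated φ μ volume := by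
  intro R
  refine ⟨Real.log (packingBound ι (2 * R + 1) + 1), fun ρ s l hρ hl _ _ _ _ f hf hclose => ?_⟩
  have hcard : (s.card : ℝ) ≠ 0 := by exact_mod_cast (Finset.card_pos.2 ⟨_, (l 0).2⟩).ne'
  have hfiber : ∀ i, volume.real (f ⁻¹' {i}) ≤ (packingBound ι (2 * R + 1) + 1) / s.card :=
    fun i => (hl.volume_fiber_le hφ hρ hclose i).trans (by gcongr; exact (lt_add_one _).le)
  have hμ : entropy μ l ≤ Real.log s.card := by simpa using entropy_le_log_card hl.measurable
  have hvol := neg_log_le_entropy hf hfiber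
  rw [Real.log_div (by positivity) hcard] at hvol
  linarith

variable [Nonempty ι]

lemma Scales.exists_forall_itinerary_eq (hB : Scales φ B b) (hφ : IsAdmissible φ) :
    ∃ r > (0 : ℝ), ∃ (s : Finset (UnitAddTorus (Fin N))) (ξ : _ → s), Measurable ξ ∧ ∀ n x y,
      itinerary (toralMap B) ξ (n + 1) x = itinerary (toralMap B) ξ (n + 1) y →
        x - y ∈ box φ (r • fun i => Real.exp (-(n * log⁺ (b i)))) := by
  obtain ⟨r, hsmall, hr⟩ :=
    ((hφ.eventually_prod_lt fun i => b i + 1).and self_mem_nhdsWithin).exists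
  obtain ⟨s, ξ, hξ⟩ := hφ.exists_isNet (ρ := fun _ => r / 2) fun _ => half_pos hr
  refine ⟨r, hr, s, ξ, hξ.measurable, fun n x y hxy =>
    hB.mem_box_of_iterate_mem_box hsmall fun j hj => ?_⟩
  have hscale : (2 : ℝ) • (fun _ : ι => r / 2) = fun _ => r :=
    funext fun _ => mul_div_cancel₀ r two_ne_zero
  rw [iterate_toralMap_sub, ← hscale]
  exact hξ.sub_mem_box (itinerary_eq_iff.1 hxy j (Nat.lt_succ_of_le hj))

variable [IsProbabilityMeasure μ] [IsProbabilityMeasure ν]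

lemma Scales.entropyRate_le_mul (hA : Scales φ A a) (hφ : IsAdmissible φ)
    (hμA : MeasurePreserving (toralMap A) μ μ) (hνB : MeasurePreserving (toralMap B) ν ν)
    (hμν : EntropyDominated φ μ ν) {θ : ℝ} (hθ : 0 ≤ θ)
    (hsum : ∑ i, log⁺ (a i) ≤ θ * ∑ i, log⁺ (b i)) {r : ℝ} (hr : 0 ≤ r)
    {κ : Type} [Fintype κ] [MeasurableSpace κ] [MeasurableSingletonClass κ]
    {ξ : UnitAddTorus (Fin N) → κ} (hξ : Measurable ξ)
    (hsep : ∀ n x y, itinerary (toralMap B) ξ (n + 1) x = itinerary (toralMap B) ξ (n + 1) y →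
      x - y ∈ box φ (r • fun i => Real.exp (-(n * log⁺ (b i)))))
    {τ : Type*} [Fintype τ] [MeasurableSpace τ] [MeasurableSingletonClass τ]
    {f : UnitAddTorus (Fin N) → τ} (hf : Measurable f) :
    entropyRate μ (toralMap A) f ≤ θ * entropyRate ν (toralMap B) ξ := by
  refine le_mul_of_forall_lt₀ fun θ' hθ' L hL => ?_
  have hL₀ : 0 ≤ L := entropyRate_nonneg.trans hL.le
  suffices entropyRate μ (toralMap A) f ≤ θ * L from
    this.trans (mul_le_mul_of_nonneg_right hθ'.le hL₀)
  obtain ⟨C, hC⟩ := exists_forall_entropy_itinerary_le hνB hξ hL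
  refine hA.entropyRate_le hφ hμA (γ := fun i => θ * log⁺ (b i))
    (fun i => mul_nonneg hθ Real.posLog_nonneg) (by rwa [← Finset.mul_sum]) (fun t ht => ?_) hf
  obtain ⟨D, hD⟩ := hμν (r / t)
  refine ⟨2 * L + C + D, fun k s l hl => ?_⟩
  let n := ⌈θ * k⌉₊
  have hbox : r • (fun i => Real.exp (-(n * log⁺ (b i)))) ≤
      (r / t) • t • fun i => Real.exp (-(k * (θ * log⁺ (b i)))) := by
    rw [smul_smul, div_mul_cancel₀ _ ht.ne']
    refine smul_le_smul_of_nonneg_left (fun i => Real.exp_le_exp.2 (neg_le_neg ?_)) hr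
    rw [← mul_assoc, mul_comm (k : ℝ)]
    exact mul_le_mul_of_nonneg_right (Nat.le_ceil _) Real.posLog_nonneg
  have hn : (n : ℝ) + 1 ≤ k * θ + 2 := by
    linarith [Nat.ceil_lt_add_one (mul_nonneg hθ k.cast_nonneg), mul_comm θ k]
  have hH := hC (n + 1)
  push_cast at hH
  calc entropy μ l
      ≤ entropy ν (itinerary (toralMap B) ξ (n + 1)) + D :=
        hD _ s l (fun i => smul_pos ht (Real.exp_pos _)) hl
          (measurable_itinerary hνB.measurable hξ _) fun x y hxy => box_mono hbox (hsep n x y hxy)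
    _ ≤ (n + 1) * L + C + D := by gcongr
    _ ≤ (k * θ + 2) * L + C + D := by gcongr
    _ = k * (θ * L) + (2 * L + C + D) := by ring

lemma Scales.ksEntropy_le_mul (hA : Scales φ A a) (hB : Scales φ B b) (hφ : IsAdmissible φ)
    (hμA : MeasurePreserving (toralMap A) μ μ) (hνB : MeasurePreserving (toralMap B) ν ν)
    (hμν : EntropyDominated φ μ ν) {θ : ℝ} (hθ : 0 ≤ θ)
    (hsum : ∑ i, log⁺ (a i) ≤ θ * ∑ i, log⁺ (b i)) :
    ksEntropy (toralMap A) μ ≤ ENNReal.ofReal θ * ksEntropy (toralMap B) ν := by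
  obtain ⟨r, hr, s, ξ, hξ, hsep⟩ := hB.exists_forall_itinerary_eq hφ
  refine ksEntropy_le hμA fun m f hf => ?_
  calc ENNReal.ofReal (entropyRate μ (toralMap A) f)
      ≤ ENNReal.ofReal (θ * entropyRate ν (toralMap B) ξ) := ENNReal.ofReal_le_ofReal
        (hA.entropyRate_le_mul hφ hμA hνB hμν hθ hsum hr.le hξ hsep hf)
    _ = ENNReal.ofReal θ * ENNReal.ofReal (entropyRate ν (toralMap B) ξ) := ENNReal.ofReal_mul hθ
    _ ≤ ENNReal.ofReal θ * ksEntropy (toralMap B) ν := by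
        gcongr
        exact ofReal_entropyRate_le_ksEntropy hνB.measurable hξ

lemma Scales.ksEntropy_ne_top (hA : Scales φ A a) (hφ : IsAdmissible φ)
    (hμA : MeasurePreserving (toralMap A) μ μ) : ksEntropy (toralMap A) μ ≠ ⊤ := by
  obtain ⟨r, hr, s, ξ, hξ, hsep⟩ := hA.exists_forall_itinerary_eq hφ
  refine ne_top_of_le_ne_top ENNReal.ofReal_ne_top (ksEntropy_le hμA fun m f hf =>
    ENNReal.ofReal_le_ofReal (hA.entropyRate_le_mul hφ hμA hμA entropyDominated_self zero_le_one
      (one_mul _).ge hr.le hξ hsep hf))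

end Domination

section Proportionality

variable {V : Type*}

lemma eq_ofReal_div_mul_of_forall_le_mul {L : V → ℝ} {h : V → ℝ≥0∞} (hL : 0 ≤ L)
    (hh : ∀ v w, ∀ θ : ℝ, 0 ≤ θ → L v ≤ θ * L w → h v ≤ ENNReal.ofReal θ * h w)
    {w : V} (hw : 0 < L w) (v : V) : h v = ENNReal.ofReal (L v / L w) * h w := by
  refine le_antisymm (hh v w _ (div_nonneg (hL v) hw.le) (div_mul_cancel₀ _ hw.ne').ge) ?_
  rcases (hL v).eq_or_lt with hv | hv
  · simp [← hv]
  calc ENNReal.ofReal (L v / L w) * h w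
      ≤ ENNReal.ofReal (L v / L w) * (ENNReal.ofReal (L w / L v) * h v) := by
        gcongr
        exact hh w v _ (div_nonneg (hL w) hv.le) (div_mul_cancel₀ _ hv.ne').ge
    _ = h v := by
        rw [← mul_assoc, ← ENNReal.ofReal_mul (div_nonneg (hL v) hw.le), div_mul_div_cancel₀ hw.ne',
          div_self hv.ne', ENNReal.ofReal_one, one_mul]

lemma exists_le_one_forall_eq_mul {L : V → ℝ} {h g : V → ℝ≥0∞} (hL : 0 ≤ L)
    (hh : ∀ v w, ∀ θ : ℝ, 0 ≤ θ → L v ≤ θ * L w → h v ≤ ENNReal.ofReal θ * h w)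
    (hg : ∀ v w, ∀ θ : ℝ, 0 ≤ θ → L v ≤ θ * L w → g v ≤ ENNReal.ofReal θ * g w)
    (hle : h ≤ g) (htop : ∀ v, g v ≠ ⊤) : ∃ c : ℝ≥0∞, c ≤ 1 ∧ ∀ v, h v = c * g v := by
  by_cases! hpos : ∃ w, 0 < L w
  · obtain ⟨w, hw⟩ := hpos
    refine ⟨h w / g w, ENNReal.div_le_of_le_mul (by simpa using hle w), fun v => ?_⟩
    calc h v = ENNReal.ofReal (L v / L w) * h w := eq_ofReal_div_mul_of_forall_le_mul hL hh hw v
      _ = ENNReal.ofReal (L v / L w) * (h w / g w * g w) := by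
          rw [ENNReal.div_mul_cancel' (fun h0 => le_zero_iff.1 (h0 ▸ hle w))
            fun hw_top => (htop w hw_top).elim]
      _ = h w / g w * g v := by
          rw [eq_ofReal_div_mul_of_forall_le_mul hL hg hw v, mul_left_comm]
  · refine ⟨0, zero_le_one, fun v => ?_⟩
    simpa using hh v v 0 le_rfl (by simpa using hpos v)

variable {N : ℕ} {ι : Type*} [Fintype ι] {φ : ι → (Fin N → ℝ) →ₗ[ℝ] ℂ}

lemma Scales.det_ne_zero {A : Matrix (Fin N) (Fin N) ℤ} {a : ι → ℝ} (h : Scales φ A a)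
    (hφ : IsAdmissible φ) : A.det ≠ 0 := by
  intro hdet
  obtain ⟨z, hz, hAz⟩ := Matrix.exists_mulVec_eq_zero_iff.2 hdet
  have hAz' : (A.map (Int.cast : ℤ → ℝ)).mulVec (fun j => (z j : ℝ)) = 0 := by
    funext i
    simpa [Matrix.mulVec, dotProduct] using congrArg (Int.cast : ℤ → ℝ) (congrFun hAz i)
  refine hz (funext fun j => ?_)
  have hz' := hφ.eq_zero_of_forall (fun j => (z j : ℝ)) fun i => by
    simpa [hAz', (h.pos i).ne'] using h.norm_apply i fun j => (z j : ℝ)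
  exact Int.cast_eq_zero.1 (congrFun hz' j)

lemma exists_forall_ksEntropy_eq_mul [Nonempty ι] (hφ : IsAdmissible φ)
    {A : V → Matrix (Fin N) (Fin N) ℤ} {a : V → ι → ℝ} (h : ∀ v, Scales φ (A v) (a v))
    {μ : Measure (UnitAddTorus (Fin N))} [IsProbabilityMeasure μ]
    (hμ : ∀ v, MeasurePreserving (toralMap (A v)) μ μ) :
    ∃ c : ℝ≥0∞, c ≤ 1 ∧ ∀ v,
      ksEntropy (toralMap (A v)) μ = c * ksEntropy (toralMap (A v)) volume := by
  have hvol : ∀ v, MeasurePreserving (toralMap (A v)) volume volume := fun v =>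
    measurePreserving_toralMap ((h v).det_ne_zero hφ)
  refine exists_le_one_forall_eq_mul (L := fun v => ∑ i, log⁺ (a v i))
    (fun v => Finset.sum_nonneg fun i _ => Real.posLog_nonneg)
    (fun v w θ hθ hvw =>
      (h v).ksEntropy_le_mul (h w) hφ (hμ v) (hμ w) entropyDominated_self hθ hvw)
    (fun v w θ hθ hvw =>
      (h v).ksEntropy_le_mul (h w) hφ (hvol v) (hvol w) entropyDominated_self hθ hvw)
    (fun v => ?_) fun v => (h v).ksEntropy_ne_top hφ (hvol v)
  simpa using (h v).ksEntropy_le_mul (h v) hφ (hμ v) (hvol v) hφ.entropyDominated_volume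
    zero_le_one (one_mul _).ge

end Proportionality

section RationalPoints

variable {N : ℕ}

/-- The covering homomorphism `ℝ^N → 𝕋^N` restricted to `ℚ^N`. -/
noncomputable def ratProj (N : ℕ) : (Fin N → ℚ) →+ UnitAddTorus (Fin N) :=
  (torusProj N).comp ((Rat.castHom ℝ).toAddMonoidHom.compLeft (Fin N))

lemma toralMap_ratProj (A : Matrix (Fin N) (Fin N) ℤ) (q : Fin N → ℚ) :
    toralMap A (ratProj N q) = ratProj N ((A.map (Int.cast : ℤ → ℚ)).mulVec q) := by
  refine (toralMap_torusProj A _).trans (congrArg (torusProj N) (funext fun i => ?_))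
  simp [Matrix.mulVec, dotProduct]

lemma eq_zero_of_forall_ratProj_smul_eq_zero {q : Fin N → ℚ}
    (h : ∀ t : ℚ, ratProj N (t • q) = 0) : q = 0 := by
  funext i
  by_contra hi
  obtain ⟨z, hz⟩ := torusProj_eq_zero_iff.1 (h (2 * q i)⁻¹)
  have hz2 : (2 * q i)⁻¹ * q i = z i := Rat.cast_injective (α := ℝ) (by simpa using congrFun hz i)
  have : (2 * z i : ℚ) = 1 := by
    rw [← hz2]
    have : q i ≠ 0 := hi
    field_simp
  have : 2 * z i = 1 := by exact_mod_cast this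
  lia

lemma eq_zero_of_finite_range {E G : Type*} [AddCommGroup E] [Module ℚ E] [AddGroup G]
    (f : E →+ G) (hf : (Set.range f).Finite) : f = 0 := by
  have : Finite f.range := hf
  ext x
  have hcard : (Nat.card f.range : ℚ) ≠ 0 := by exact_mod_cast Nat.card_pos.ne'
  let y : f.range := ⟨f ((Nat.card f.range : ℚ)⁻¹ • x), _, rfl⟩
  have hy := congrArg Subtype.val (card_nsmul_eq_zero' (x := y))
  calc f x = f (Nat.card f.range • (Nat.card f.range : ℚ)⁻¹ • x) := by
        rw [← Nat.cast_smul_eq_nsmul ℚ, smul_inv_smul₀ hcard]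
    _ = 0 := (map_nsmul f _ _).trans hy

lemma exists_intMatrix_mulVec_eq_zero_iff (W : Submodule ℚ (Fin N → ℚ)) :
    ∃ M : Matrix (Fin N) (Fin N) ℤ,
      ∀ w, (M.map (Int.cast : ℤ → ℚ)).mulVec w = 0 ↔ w ∈ W := by
  obtain ⟨W', hW'⟩ := W.exists_isCompl
  let P := W'.projection W hW'.symm
  obtain ⟨D, hD⟩ := IsLocalization.exist_integer_multiples_of_finite (nonZeroDivisors ℤ)
    fun p : Fin N × Fin N => LinearMap.toMatrix' P p.1 p.2
  choose M hM using hD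
  have hMP : (Matrix.of fun i j => M (i, j)).map (Int.cast : ℤ → ℚ) =
      (D : ℤ) • LinearMap.toMatrix' P := by
    ext i j
    exact hM (i, j)
  refine ⟨Matrix.of fun i j => M (i, j), fun w => ?_⟩
  rw [hMP, Matrix.smul_mulVec, smul_eq_zero_iff_right (nonZeroDivisors.coe_ne_zero D),
    LinearMap.toMatrix'_mulVec, ← LinearMap.mem_ker, Submodule.ker_projection]

end RationalPoints

section Irreducibility

universe u

variable {N : ℕ} {V : Type*} {A : V → Matrix (Fin N) (Fin N) ℤ}

/-- A family of endomorphisms of the torus is irreducible if every closed proper subgroup which is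
invariant under all of them is finite. -/
def IsIrreducibleFamily (A : V → Matrix (Fin N) (Fin N) ℤ) : Prop :=
  ∀ S : AddSubgroup (UnitAddTorus (Fin N)), IsClosed (S : Set (UnitAddTorus (Fin N))) →
    (∀ v, ∀ x ∈ S, toralMap (A v) x ∈ S) → S ≠ ⊤ → (S : Set (UnitAddTorus (Fin N))).Finite

lemma IsIrreducibleFamily.eq_bot_or_eq_top (h : IsIrreducibleFamily A)
    {W : Submodule ℚ (Fin N → ℚ)}
    (hW : ∀ v, ∀ w ∈ W, ((A v).map (Int.cast : ℤ → ℚ)).mulVec w ∈ W) : W = ⊥ ∨ W = ⊤ := by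
  let S := (W.toAddSubgroup.map (ratProj N)).topologicalClosure
  have hWS : ∀ w ∈ W, ratProj N w ∈ S := fun w hw =>
    AddSubgroup.le_topologicalClosure _ ⟨w, hw, rfl⟩
  by_cases hS : S = ⊤
  · right
    obtain ⟨M, hM⟩ := exists_intMatrix_mulVec_eq_zero_iff W
    have hMS : ∀ x ∈ S, toralMap M x = 0 := by
      refine fun x hx => closure_minimal (t := {x | toralMap M x = 0}) ?_
        (isClosed_eq (continuous_toralMap M) continuous_const) hx
      rintro _ ⟨w, hw, rfl⟩
      change toralMap M (ratProj N w) = 0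
      rw [toralMap_ratProj, (hM w).2 hw, map_zero]
    refine eq_top_iff.2 fun q _ => (hM q).1 (eq_zero_of_forall_ratProj_smul_eq_zero fun t => ?_)
    rw [← Matrix.mulVec_smul, ← toralMap_ratProj]
    exact hMS _ (hS ▸ AddSubgroup.mem_top _)
  · left
    have hfinite : (S : Set (UnitAddTorus (Fin N))).Finite := by
      refine h S (AddSubgroup.isClosed_topologicalClosure _) (fun v x hx => ?_) hS
      refine map_mem_closure (continuous_toralMap (A v)) hx ?_
      rintro _ ⟨w, hw, rfl⟩
      exact ⟨_, hW v w hw, (toralMap_ratProj (A v) w).symm⟩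
    have hzero : (ratProj N).comp W.subtype.toAddMonoidHom = 0 := by
      refine eq_zero_of_finite_range _ (hfinite.subset ?_)
      rintro _ ⟨w, rfl⟩
      exact hWS w w.2
    exact W.eq_bot_iff.2 fun w hw => eq_zero_of_forall_ratProj_smul_eq_zero fun t =>
      DFunLike.congr_fun hzero ⟨t • w, W.smul_mem t hw⟩

open scoped IsMulCommutative in
-- The commuting operators generate a commutative algebra over which `E` is a simple module, that
-- is, a residue field of this algebra.
lemma exists_field_linearEquiv {k : Type*} {E : Type u} [Field k] [AddCommGroup E] [Module k E]
    [Nontrivial E] {T : V → Module.End k E} (hcomm : ∀ v w, Commute (T v) (T w))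
    (hirr : ∀ W : Submodule k E, (∀ v, ∀ x ∈ W, T v x ∈ W) → W = ⊥ ∨ W = ⊤) :
    ∃ (K : Type u) (_ : Field K) (_ : Algebra k K) (e : E ≃ₗ[k] K) (θ : V → K),
      ∀ v x, e (T v x) = θ v * e x := by
  let R := Algebra.adjoin k (Set.range T)
  have hT : ∀ v, T v ∈ R := fun v => Algebra.subset_adjoin ⟨v, rfl⟩
  have : IsMulCommutative R := Algebra.isMulCommutative_adjoin k (by
    rintro _ ⟨v, rfl⟩ _ ⟨w, rfl⟩
    exact hcomm v w)
  have hsimple : IsSimpleModule R E := by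
    refine { eq_bot_or_eq_top := fun W => ?_ }
    refine (hirr (W.restrictScalars k) fun v x hx => W.smul_mem ⟨T v, hT v⟩ hx).imp ?_ ?_
    · exact Submodule.restrictScalars_eq_bot_iff _ _ _ |>.1
    · exact Submodule.restrictScalars_eq_top_iff _ _ _ |>.1
  obtain ⟨I, hI, ⟨e⟩⟩ := isSimpleModule_iff_quot_maximal.1 hsimple
  exact ⟨R ⧸ I, Ideal.Quotient.field I, inferInstance, e.restrictScalars k,
    fun v => Ideal.Quotient.mk I ⟨T v, hT v⟩, fun v x => e.map_smul (⟨T v, hT v⟩ : R) x⟩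

end Irreducibility

section NumberField

variable {N : ℕ} {K : Type*} [Field K] [Algebra ℚ K]

/-- The extension to `ℝ^N` of the functional `q ↦ σ (e q)` on `ℚ^N`, where `e` identifies `ℚ^N`
with a number field and `σ` is a complex embedding of the latter. -/
noncomputable def embeddingFunctional (e : (Fin N → ℚ) ≃ₗ[ℚ] K) (σ : K →ₐ[ℚ] ℂ) :
    (Fin N → ℝ) →ₗ[ℝ] ℂ :=
  Fintype.linearCombination ℝ fun j => σ (e (Pi.single j 1))

lemma linearEquiv_eq_sum_smul_single (e : (Fin N → ℚ) ≃ₗ[ℚ] K) (q : Fin N → ℚ) :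
    e q = ∑ j, q j • e (Pi.single j 1) := by
  conv_lhs => rw [pi_eq_sum_univ' q, map_sum]
  simp only [map_smul]

lemma embeddingFunctional_ratCast (e : (Fin N → ℚ) ≃ₗ[ℚ] K) (σ : K →ₐ[ℚ] ℂ) (q : Fin N → ℚ) :
    embeddingFunctional e σ (fun j => (q j : ℝ)) = σ (e q) := by
  simp [linearEquiv_eq_sum_smul_single e q, embeddingFunctional, Fintype.linearCombination_apply,
    Algebra.smul_def]

lemma embeddingFunctional_mulVec {e : (Fin N → ℚ) ≃ₗ[ℚ] K} {A : Matrix (Fin N) (Fin N) ℤ} {θ : K}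
    (h : ∀ q, e ((A.map (Int.cast : ℤ → ℚ)).mulVec q) = θ * e q) (σ : K →ₐ[ℚ] ℂ) (u : Fin N → ℝ) :
    embeddingFunctional e σ ((A.map (Int.cast : ℤ → ℝ)).mulVec u) =
      σ θ * embeddingFunctional e σ u := by
  suffices embeddingFunctional e σ ∘ₗ (A.map (Int.cast : ℤ → ℝ)).mulVecLin =
      σ θ • embeddingFunctional e σ from LinearMap.congr_fun this u
  refine LinearMap.pi_ext' fun j => LinearMap.ext_ring ?_
  have hcol : (A.map (Int.cast : ℤ → ℝ)).mulVec (Pi.single j 1) = fun i =>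
      ((A.map (Int.cast : ℤ → ℚ)).mulVec (Pi.single j 1) i : ℝ) := by
    funext i
    simp
  have hsingle : (Pi.single j 1 : Fin N → ℝ) = fun i => ((Pi.single j 1 : Fin N → ℚ) i : ℝ) := by
    funext i
    simp [Pi.single_apply, apply_ite]
  calc embeddingFunctional e σ ((A.map (Int.cast : ℤ → ℝ)).mulVec (Pi.single j 1))
      = σ (e ((A.map (Int.cast : ℤ → ℚ)).mulVec (Pi.single j 1))) := by
        rw [hcol, embeddingFunctional_ratCast]
    _ = σ θ * embeddingFunctional e σ (Pi.single j 1) := by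
        rw [h, map_mul, hsingle, embeddingFunctional_ratCast]

lemma one_le_prod_norm_embeddings [FiniteDimensional ℚ K] {y : K} (hy : IsIntegral ℤ y)
    (hy0 : y ≠ 0) : 1 ≤ ∏ σ : K →ₐ[ℚ] ℂ, ‖σ y‖ := by
  obtain ⟨n, hn⟩ := IsIntegrallyClosed.isIntegral_iff.1 (Algebra.isIntegral_norm ℚ hy)
  have hn0 : n ≠ 0 := by
    rintro rfl
    rw [map_zero, eq_comm, Algebra.norm_eq_zero_iff] at hn
    exact hy0 hn
  rw [← norm_prod, ← Algebra.norm_eq_prod_embeddings ℚ ℂ, ← hn]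
  simpa using (mod_cast Int.one_le_abs hn0 : (1 : ℝ) ≤ |(n : ℝ)|)

lemma exists_pos_forall_le_prod_norm_embeddings [FiniteDimensional ℚ K]
    (e : (Fin N → ℚ) ≃ₗ[ℚ] K) :
    ∃ c > (0 : ℝ), ∀ z : Fin N → ℤ, z ≠ 0 →
      c ≤ ∏ σ : K →ₐ[ℚ] ℂ, ‖σ (e fun j => (z j : ℚ))‖ := by
  classical
  obtain ⟨D, hD0, hD⟩ := exists_integral_multiples ℤ ℚ
    (Finset.univ.image fun j => e (Pi.single j 1))
  have hDpos : 0 < ∏ _σ : K →ₐ[ℚ] ℂ, |(D : ℝ)| :=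
    Finset.prod_pos fun _ _ => abs_pos.2 (Int.cast_ne_zero.2 hD0)
  refine ⟨_, inv_pos.2 hDpos, fun z hz => ?_⟩
  have hez : D • e (fun j => (z j : ℚ)) = ∑ j, z j • D • e (Pi.single j 1) := by
    simp only [linearEquiv_eq_sum_smul_single e fun j => (z j : ℚ), Finset.smul_sum,
      Int.cast_smul_eq_zsmul, smul_comm D]
  have hintegral : IsIntegral ℤ (D • e fun j => (z j : ℚ)) := by
    rw [hez]
    exact IsIntegral.sum _ fun j _ => (hD _ (Finset.mem_image_of_mem _ (Finset.mem_univ j))).smul _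
  have hne : D • e (fun j => (z j : ℚ)) ≠ 0 := by
    have := algebraRat.charZero K
    refine smul_ne_zero hD0 (e.map_ne_zero_iff.2 fun hz0 => hz (funext fun j => ?_))
    exact Int.cast_eq_zero.1 (congrFun hz0 j)
  rw [inv_le_iff_one_le_mul₀' hDpos, ← Finset.prod_mul_distrib]
  simpa [norm_mul] using one_le_prod_norm_embeddings hintegral hne

lemma eq_zero_of_forall_embeddingFunctional_eq_zero [FiniteDimensional ℚ K]
    (e : (Fin N → ℚ) ≃ₗ[ℚ] K) {u : Fin N → ℝ} (hu : ∀ σ, embeddingFunctional e σ u = 0) :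
    u = 0 := by
  let b : Module.Basis (Fin N) ℚ K := Module.Basis.ofEquivFun e.symm
  have hcard : Fintype.card (Fin N) = Fintype.card (K →ₐ[ℚ] ℂ) := by
    rw [AlgHom.card, Module.finrank_eq_card_basis b]
  let σ : Fin N ≃ (K →ₐ[ℚ] ℂ) := Fintype.equivOfCardEq hcard
  have hdet : (Algebra.embeddingsMatrixReindex ℚ ℂ b σ).det ≠ 0 := by
    intro h0
    have hdiscr := Algebra.discr_eq_det_embeddingsMatrixReindex_pow_two ℚ ℂ b σ
    rw [h0, zero_pow two_ne_zero] at hdiscr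
    exact Algebra.discr_not_zero_of_basis ℚ b (by simpa using hdiscr)
  have hvec : Matrix.vecMul (fun j => (u j : ℂ)) (Algebra.embeddingsMatrixReindex ℚ ℂ b σ) = 0 := by
    funext k
    simpa [Matrix.vecMul, dotProduct, Algebra.embeddingsMatrixReindex, Algebra.embeddingsMatrix, b,
      embeddingFunctional, Fintype.linearCombination_apply] using hu (σ k)
  exact funext fun j => Complex.ofReal_eq_zero.1
    (congrFun (Matrix.eq_zero_of_vecMul_eq_zero hdet hvec) j)

lemma isAdmissible_embeddingFunctional [FiniteDimensional ℚ K] (e : (Fin N → ℚ) ≃ₗ[ℚ] K) :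
    IsAdmissible (embeddingFunctional e) := by
  refine ⟨fun u => eq_zero_of_forall_embeddingFunctional_eq_zero e, ?_⟩
  obtain ⟨c, hc, hle⟩ := exists_pos_forall_le_prod_norm_embeddings e
  refine ⟨c, hc, fun z hz => (hle z hz).trans_eq (Finset.prod_congr rfl fun σ _ => ?_)⟩
  rw [← embeddingFunctional_ratCast]
  simp

lemma scales_embeddingFunctional {e : (Fin N → ℚ) ≃ₗ[ℚ] K} {A : Matrix (Fin N) (Fin N) ℤ} {θ : K}
    (h : ∀ q, e ((A.map (Int.cast : ℤ → ℚ)).mulVec q) = θ * e q) (hA : A.det ≠ 0) :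
    Scales (embeddingFunctional e) A fun σ => ‖σ θ‖ := by
  have hθ : θ ≠ 0 := by
    rintro rfl
    have hker : (A.map (Int.cast : ℤ → ℚ)).mulVec (e.symm 1) = 0 :=
      e.injective (by rw [h, zero_mul, map_zero])
    have hdet := Matrix.exists_mulVec_eq_zero_iff.1 ⟨e.symm 1, by simp, hker⟩
    rw [← Int.cast_det] at hdet
    exact hA (Int.cast_eq_zero.1 hdet)
  refine ⟨fun σ => norm_pos_iff.2 ((map_ne_zero σ).2 hθ), fun σ u => ?_⟩
  rw [embeddingFunctional_mulVec h, norm_mul]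

end NumberField

section IrreducibleFamilies

variable {N : ℕ} {V : Type*} {A : V → Matrix (Fin N) (Fin N) ℤ}

lemma IsIrreducibleFamily.exists_field_linearEquiv [Nonempty (Fin N)] (h : IsIrreducibleFamily A)
    (hcomm : ∀ v w, Commute (A v) (A w)) :
    ∃ (K : Type) (_ : Field K) (_ : Algebra ℚ K) (e : (Fin N → ℚ) ≃ₗ[ℚ] K) (θ : V → K),
      ∀ v q, e (((A v).map (Int.cast : ℤ → ℚ)).mulVec q) = θ v * e q :=
  ToralEntropy.exists_field_linearEquiv
    (T := fun v => Matrix.toLinAlgEquiv' ((A v).map (Int.cast : ℤ → ℚ)))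
    (fun v w => ((hcomm v w).map (Int.castRingHom ℚ).mapMatrix).map Matrix.toLinAlgEquiv')
    fun _ hW => h.eq_bot_or_eq_top hW

end IrreducibleFamilies

end ToralEntropy

open ToralEntropy in
theorem entropy_proportional_for_irreducible_actions_general {V : Type*} {N : ℕ}
    (A : V → Matrix (Fin N) (Fin N) ℤ) (hcomm : ∀ v w, Commute (A v) (A w))
    (hdet : ∀ v, (A v).det ≠ 0) (hirr : IsIrreducibleFamily A)
    (μ : Measure (UnitAddTorus (Fin N))) [IsProbabilityMeasure μ]
    (hinv : ∀ v, MeasurePreserving (toralMap (A v)) μ μ) :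
    ∃ c : ℝ≥0∞, c ≤ 1 ∧ ∀ v,
      ksEntropy (toralMap (A v)) μ = c * ksEntropy (toralMap (A v)) volume := by
  rcases isEmpty_or_nonempty (Fin N) with hN | hN
  · have hμ : μ = volume := Measure.ext fun s _ => by
      rcases s.eq_empty_or_nonempty with rfl | hs
      · simp only [measure_empty]
      · rw [Subsingleton.eq_univ_of_nonempty hs, measure_univ, measure_univ]
    exact ⟨1, le_rfl, fun v => by rw [hμ, one_mul]⟩
  · obtain ⟨K, _, _, e, θ, he⟩ := hirr.exists_field_linearEquiv hcomm
    have : FiniteDimensional ℚ K := e.finiteDimensional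
    have : Nonempty (K →ₐ[ℚ] ℂ) := ⟨IsAlgClosed.lift⟩
    exact exists_forall_ksEntropy_eq_mul (isAdmissible_embeddingFunctional e)
      (fun v => scales_embeddingFunctional (he v) (hdet v)) hinv

/-- one-dimensionality of the entropy function: Let `d > 1` and let `α` be
a faithful, irreducible `ℤ^d`-action by automorphisms of `𝕋^N`, and let `λ = volume`
denote Haar–Lebesgue measure.  For every `α`-invariant Borel probability measure `μ`
there is a constant `c = c_μ ∈ [0,1]` with `h_μ(α_𝐧) = c · h_λ(α_𝐧)` for all `𝐧`. -/
theorem entropy_proportional_for_irreducible_actions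
    (d N : ℕ) (hd : 1 < d)
    (α : (Fin d → ℤ) → Matrix (Fin N) (Fin N) ℤ)
    (hα0 : α 0 = 1)
    (hαadd : ∀ v w, α (v + w) = α v * α w)
    (hfaithful : ∀ v : Fin d → ℤ, v ≠ 0 → α v ≠ 1)
    (hirr : IsIrreducibleOn α ⊤)
    (μ : Measure (Fin N → UnitAddCircle)) [IsProbabilityMeasure μ]
    (hinv : ∀ v, Measure.map (toralMap (α v)) μ = μ) :
    ∃ c : ℝ≥0∞, c ≤ 1 ∧ ∀ v : Fin d → ℤ,
      ksEntropy (toralMap (α v)) μ = c * ksEntropy (toralMap (α v)) volume := by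
  have hdet (v) : (α v).det ≠ 0 := fun h0 => by
    simpa [← hαadd, hα0, h0] using (α v).det_mul (α (-v))
  exact entropy_proportional_for_irreducible_actions_general α
    (fun v w => by rw [Commute, SemiconjBy, ← hαadd, ← hαadd, add_comm]) hdet
    (fun S hS h => hirr S hS fun v _ => h v) μ
    fun v => ⟨(ToralEntropy.continuous_toralMap (α v)).measurable, hinv v⟩
end

section
/- Let X = SL(3,ℤ)\SL(3,ℝ) and let H be the group of 3×3 diagonal matrices with positive diagonal entries and determinant 1, acting on X by right translation. If every nonempty compact H-invariant subset of X is a union of compact H-orbits, then for all real numbers α and β one has liminf_{n→∞} n · ‖nα‖ · ‖nβ‖ = 0. -/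
open Filter

/-- `SL(3,ℝ)`. -/
abbrev SL3R := Matrix.SpecialLinearGroup (Fin 3) ℝ

noncomputable instance : TopologicalSpace SL3R :=
  TopologicalSpace.induced (fun g : SL3R => (g : Matrix (Fin 3) (Fin 3) ℝ)) inferInstance

/-- The subgroup `SL(3,ℤ)` of `SL(3,ℝ)` (the image of the integer points). -/
def SL3Z : Subgroup SL3R :=
  (Matrix.SpecialLinearGroup.map (n := Fin 3) (Int.castRingHom ℝ)).range

/-- The homogeneous space `X = SL(3,ℤ) \ SL(3,ℝ)` of right cosets. -/
abbrev XSL3 := Quotient (QuotientGroup.rightRel SL3Z)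

/-- Right translation by `g ∈ SL(3,ℝ)` on `X = SL(3,ℤ)\SL(3,ℝ)`. -/
def rtSL3 (g : SL3R) (x : XSL3) : XSL3 :=
  Quotient.map' (fun h => h * g)
    (fun a b hab => by
      rw [QuotientGroup.rightRel_apply] at *
      simpa [mul_assoc] using hab) x

/-- Membership in `H`, the group of diagonal matrices with positive diagonal entries
(and determinant one) in `SL(3,ℝ)`. -/
def IsPosDiag3 (g : SL3R) : Prop :=
  (∀ i j, i ≠ j → (g : Matrix (Fin 3) (Fin 3) ℝ) i j = 0) ∧
    ∀ i, 0 < (g : Matrix (Fin 3) (Fin 3) ℝ) i i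

/-- The `H`-orbit of a point of `X`. -/
def HOrbit3 (x : XSL3) : Set XSL3 := {y | ∃ g : SL3R, IsPosDiag3 g ∧ y = rtSL3 g x}

/-- The distance from a real number to the nearest integer. -/
noncomputable def distToInt (x : ℝ) : ℝ := |x - round x|

/-! If Littlewood's conjecture fails for `(α, β)`, then `n ‖nα‖ ‖nβ‖` is bounded below by a positive
constant, and the bound `|w₀ w₁ w₂| ≤ ‖w‖³` shows that the lattice spanned by the rows of
`g = [[1, α, β], [0, 1, 0], [0, 0, 1]]` keeps all its nonzero vectors long under the cone of
`diag (e^{-s-t}, e^s, e^t)` with `s, t ≥ 0`. By Mahler's criterion the orbit of the coset of `g`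
under this cone is relatively compact, so its `ω`-limit set `Ω` is nonempty, compact and
`H`-invariant, and by hypothesis consists of compact `H`-orbits.

Let `y₀ ∈ Ω` be approximated by points `y₀ u_k` of the cone orbit with `u_k → 1`. The part of `u_k`
above the diagonal does not vanish: otherwise `y₀` would have a representative whose second row ends
in zero, and the `H`-orbit of such a coset is unbounded. Conjugating by
`diag (e^{-t_k}, 1, e^{t_k})` for suitable `t_k → ∞` contracts the part of `u_k` below the diagonal,
and renormalizes the part above it to size one. In the limit one gets `y ∈ Ω` and an upper
unitriangular `u ≠ 1` with `y u ∈ Ω`. The opposite half of the same one-parameter group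
contracts `u` to `1`, and two compact orbits of a commutative group cannot be related by a
nontrivial contracted element when the ambient group acts locally freely, a contradiction.
-/

open Topology MulAction
open scoped RightActions

section RightCosetSpace

variable {G : Type*} [Group G]

instance (Γ : Subgroup G) : MulAction Gᵐᵒᵖ (Quotient (QuotientGroup.rightRel Γ)) where
  smul g := Quotient.map' (· * g.unop) fun a b hab => by
    rw [QuotientGroup.rightRel_apply] at *
    simpa [mul_assoc] using hab
  one_smul := by
    rintro ⟨g⟩
    exact congrArg (Quotient.mk _) (mul_one g)
  mul_smul := by
    rintro h k ⟨g⟩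
    exact congrArg (Quotient.mk _) (mul_assoc g k.unop h.unop).symm

theorem mk_rightRel_smul (Γ : Subgroup G) (g h : G) :
    (Quotient.mk _ g : Quotient (QuotientGroup.rightRel Γ)) <• h = Quotient.mk _ (g * h) :=
  rfl

theorem mk_rightRel_eq_iff (Γ : Subgroup G) {g h : G} :
    (Quotient.mk _ g : Quotient (QuotientGroup.rightRel Γ)) = Quotient.mk _ h ↔ h * g⁻¹ ∈ Γ :=
  Quotient.eq.trans QuotientGroup.rightRel_apply

variable [TopologicalSpace G] [IsTopologicalGroup G] (Γ : Subgroup G)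

theorem isOpenQuotientMap_mk_rightRel :
    IsOpenQuotientMap (Quotient.mk _ : G → Quotient (QuotientGroup.rightRel Γ)) :=
  MulAction.isOpenQuotientMap_quotientMk

instance : ContinuousSMul Gᵐᵒᵖ (Quotient (QuotientGroup.rightRel Γ)) where
  continuous_smul := by
    rw [← (IsOpenQuotientMap.id.prodMap (isOpenQuotientMap_mk_rightRel Γ)).continuous_comp_iff]
    exact (isOpenQuotientMap_mk_rightRel Γ).continuous.comp
      (continuous_snd.mul (MulOpposite.continuous_unop.comp continuous_fst))

instance [T2Space G] [DiscreteTopology Γ] : T2Space (Quotient (QuotientGroup.rightRel Γ)) :=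
  have : IsClosed (Γ : Set G) := Γ.isClosed_of_discrete
  t2Space_quotient_mulAction_of_properSMul

theorem frequently_eq_smul_rightRel {ι : Type*} {l : Filter ι}
    {f : ι → Quotient (QuotientGroup.rightRel Γ)} {y : Quotient (QuotientGroup.rightRel Γ)}
    (hy : MapClusterPt y l f) : ∃ᶠ p in l ×ˢ 𝓝 (1 : G), f p.1 = y <• p.2 := by
  induction y using Quotient.inductionOn with | h g
  have hopen : IsOpenMap fun u : G =>
      (Quotient.mk _ g : Quotient (QuotientGroup.rightRel Γ)) <• u :=
    (isOpenQuotientMap_mk_rightRel Γ).isOpenMap.comp (isOpenMap_mul_left g)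
  intro hne
  obtain ⟨s, hs, t, ht, hst⟩ := eventually_prod_iff.1 hne
  have hnhds := hopen.image_mem_nhds ht
  rw [mk_rightRel_smul, mul_one] at hnhds
  obtain ⟨i, ⟨u, hu, hui⟩, hi⟩ := ((hy.frequently hnhds).and_eventually hs).exists
  exact hst hi hu hui.symm

end RightCosetSpace

section LocallyFree

/-- An action of a topological group is locally free if, locally uniformly in the point, no
nontrivial element close to `1` fixes it. -/
def IsLocallyFree (G X : Type*) [Group G] [TopologicalSpace G] [TopologicalSpace X]
    [MulAction G X] : Prop :=
  ∀ x : X, ∀ᶠ p in 𝓝 (1 : G) ×ˢ 𝓝 x, p.1 • p.2 = p.2 → p.1 = 1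

variable {G : Type*} [Group G] [TopologicalSpace G]

theorem isLocallyFree_rightRel [IsTopologicalGroup G] (Γ : Subgroup G) [DiscreteTopology Γ] :
    IsLocallyFree Gᵐᵒᵖ (Quotient (QuotientGroup.rightRel Γ)) := by
  intro x
  induction x using Quotient.inductionOn with | h g
  obtain ⟨U, hU, hUΓ⟩ : ∃ U ∈ 𝓝 (1 : G), ∀ γ ∈ Γ, γ ∈ U → γ = 1 := by
    obtain ⟨U, hU, h⟩ := (mem_nhds_subtype (Γ : Set G) 1 {1}).1
      (isOpen_discrete _ |>.mem_nhds rfl)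
    exact ⟨U, hU, fun γ hγ hγU => congrArg Subtype.val (@h ⟨γ, hγ⟩ hγU)⟩
  have hcont : Tendsto (fun p : Gᵐᵒᵖ × G => p.2 * p.1.unop * p.2⁻¹) (𝓝 (1, g)) (𝓝 1) := by
    refine Continuous.tendsto' ?_ _ _ (by simp)
    fun_prop
  have hmap : 𝓝 (1 : Gᵐᵒᵖ) ×ˢ 𝓝 (Quotient.mk _ g : Quotient (QuotientGroup.rightRel Γ)) =
      map (Prod.map id (Quotient.mk _)) (𝓝 (1, g)) := by
    rw [← nhds_prod_eq]
    exact ((IsOpenQuotientMap.id.prodMap (isOpenQuotientMap_mk_rightRel Γ)).map_nhds_eq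
      (1, g)).symm
  rw [hmap, eventually_map]
  filter_upwards [hcont hU] with ⟨h, k⟩ hk hfix
  have := hUΓ _ ((mk_rightRel_eq_iff Γ).1 hfix.symm) hk
  simpa using this

variable {X : Type*} [TopologicalSpace X] [T2Space X] [MulAction G X] [ContinuousSMul G X]

theorem IsLocallyFree.eq_one_of_isCompact_orbit (hfree : IsLocallyFree G X) {A : Subgroup G}
    [IsMulCommutative A] {x : X} {u : G} (hx : IsCompact (orbit A x))
    (hu : IsCompact (orbit A (u • x))) {ι : Type*} {l : Filter ι} [l.NeBot] {a : ι → A}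
    (ha : Tendsto (fun i => (a i : G) * u * (a i : G)⁻¹) l (𝓝 1)) : u = 1 := by
  -- Conjugation contracts `u`, so `a i • x` and `a i • u • x` have a common limit; hence `u • x` is
  -- in the orbit of `x`, say `u • x = c • x`, and `c` fixes `x` because `A` is commutative. Then
  -- the conjugates of `u` fix `a i • x`, so they are eventually trivial.
  let F := Ultrafilter.of l
  replace ha : Tendsto _ F _ := ha.mono_left (Ultrafilter.of_le l)
  obtain ⟨y, ⟨b, rfl⟩, hy⟩ := hx.ultrafilter_le_nhds (F.map fun i => a i • x)
    (le_principal_iff.2 <| mem_map.2 <| Eventually.of_forall fun i => mem_orbit x (a i))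
  change Tendsto (fun i => a i • x) F (𝓝 (b • x)) at hy
  have conj_smul (i : ι) : ((a i : G) * u * (a i : G)⁻¹) • a i • x = a i • u • x := by
    simp [Subgroup.smul_def, mul_smul]
  have A_comm (s t : A) (z : X) : s • t • z = t • s • z := by
    rw [smul_smul, mul_comm', mul_smul]
  have hyu : Tendsto (fun i => a i • u • x) F (𝓝 (b • x)) := by
    simpa only [conj_smul, one_smul] using ha.smul hy
  obtain ⟨c, hc⟩ : ∃ c : A, u • x = c • x := by
    obtain ⟨d, hd⟩ : ∃ d : A, d • u • x = b • x :=
      hu.isClosed.mem_of_tendsto hyu (.of_forall fun i => mem_orbit _ _)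
    exact ⟨d⁻¹ * b, by rw [mul_smul, ← hd, inv_smul_smul]⟩
  have hcx : c • x = x := by
    have : Tendsto (fun i => a i • u • x) F (𝓝 (c • b • x)) := by
      simpa only [hc, A_comm c] using hy.const_smul c
    exact smul_left_cancel b <| by rw [← A_comm, tendsto_nhds_unique this hyu]
  have hfix := (Tendsto.prodMk ha hy).eventually (hfree (b • x))
  obtain ⟨i, hi⟩ := hfix.exists
  simpa using hi (by rw [conj_smul, hc, hcx])

end LocallyFree

section Reduction

open Matrix

theorem exists_int_dotProduct_self_le {ι : Type*} [Fintype ι] (w b : ι → ℝ) (x : ℝ) :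
    ∃ m : ℤ, (w + (x - m) • b) ⬝ᵥ (w + (x - m) • b) ≤ w ⬝ᵥ w + b ⬝ᵥ b / 4 := by
  set f := Int.fract x
  have hf : 0 ≤ f ∧ f < 1 := ⟨Int.fract_nonneg x, Int.fract_lt_one x⟩
  have expand (t : ℝ) : (w + t • b) ⬝ᵥ (w + t • b) =
      w ⬝ᵥ w + 2 * t * (w ⬝ᵥ b) + t ^ 2 * (b ⬝ᵥ b) := by
    simp only [add_dotProduct, dotProduct_add, smul_dotProduct, dotProduct_smul, smul_eq_mul,
      dotProduct_comm b w]
    ring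
  have hb : 0 ≤ b ⬝ᵥ b := dotProduct_self_star_nonneg b
  -- Weighted by `1 - f` and `f`, the translates for `⌊x⌋` and `⌊x⌋ + 1` average to
  -- `w ⬝ᵥ w + f (1 - f) b ⬝ᵥ b`.
  by_contra! hlt
  have hfloor := hlt ⌊x⌋
  have hceil := hlt (⌊x⌋ + 1)
  push_cast at hceil
  rw [show x - (⌊x⌋ : ℝ) = f from rfl, expand] at hfloor
  rw [show x - (⌊x⌋ + 1 : ℝ) = f - 1 by simp only [f, Int.fract]; ring, expand] at hceil
  nlinarith [mul_nonneg (sq_nonneg (2 * f - 1)) hb]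

theorem cross_dot_self_smul (a b c : Fin 3 → ℝ) :
    ((a ⨯₃ b) ⬝ᵥ (a ⨯₃ b)) • c = ((c ⨯₃ b) ⬝ᵥ (a ⨯₃ b)) • a + ((a ⨯₃ c) ⬝ᵥ (a ⨯₃ b)) • b +
      (c ⬝ᵥ a ⨯₃ b) • (a ⨯₃ b) := by
  ext i
  fin_cases i <;> simp [cross_apply, dotProduct, Fin.sum_univ_three] <;> ring

theorem dotProduct_self_mul_le_of_reduced {a b c : Fin 3 → ℝ}
    (hab : (2 * a ⬝ᵥ b) ^ 2 ≤ (a ⬝ᵥ a) * (b ⬝ᵥ b)) (hac : a ⬝ᵥ a ≤ c ⬝ᵥ c)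
    (hbc : b ⬝ᵥ b ≤ c ⬝ᵥ c)
    (hc : ∀ m n : ℤ, c ⬝ᵥ c ≤
      (c + (m : ℝ) • a + (n : ℝ) • b) ⬝ᵥ (c + (m : ℝ) • a + (n : ℝ) • b)) :
    3 * ((a ⬝ᵥ a) * (b ⬝ᵥ b)) * (c ⬝ᵥ c) ≤ 8 * (c ⬝ᵥ a ⨯₃ b) ^ 2 := by
  -- If `w` is the component of `c` orthogonal to `a` and `b`, minimality of `c` gives
  -- `c ⬝ᵥ c ≤ w ⬝ᵥ w + (a ⬝ᵥ a + b ⬝ᵥ b) / 4`, and the last term is at most `(c ⬝ᵥ c) / 2`.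
  set Δ := (a ⨯₃ b) ⬝ᵥ (a ⨯₃ b) with hΔ_def
  have hΔ : 3 * ((a ⬝ᵥ a) * (b ⬝ᵥ b)) ≤ 4 * Δ := by
    rw [hΔ_def, cross_dot_cross, dotProduct_comm b a]
    linarith
  have hcc : 0 ≤ c ⬝ᵥ c := dotProduct_self_star_nonneg c
  suffices Δ * (c ⬝ᵥ c) ≤ 2 * (c ⬝ᵥ a ⨯₃ b) ^ 2 by nlinarith
  obtain hΔ0 | hΔ0 := le_or_gt Δ 0
  · exact (mul_nonpos_of_nonpos_of_nonneg hΔ0 hcc).trans (by positivity)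
  set x := (c ⨯₃ b) ⬝ᵥ (a ⨯₃ b) / Δ
  set y := (a ⨯₃ c) ⬝ᵥ (a ⨯₃ b) / Δ
  set w := (c ⬝ᵥ a ⨯₃ b / Δ) • (a ⨯₃ b) with hw
  have hdecomp : c = x • a + y • b + w := by
    rw [← inv_smul_smul₀ hΔ0.ne' c, cross_dot_self_smul]
    simp only [smul_add, smul_smul, x, y, w, div_eq_inv_mul]
  obtain ⟨m, hm⟩ := exists_int_dotProduct_self_le w a x
  obtain ⟨n, hn⟩ := exists_int_dotProduct_self_le (w + (x - m) • a) b y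
  have hmn : w + (x - m) • a + (y - n) • b =
      c + ((-m : ℤ) : ℝ) • a + ((-n : ℤ) : ℝ) • b := by
    rw [hdecomp]
    push_cast
    module
  have hle : c ⬝ᵥ c ≤ 2 * (w ⬝ᵥ w) := by
    have := hc (-m) (-n)
    rw [← hmn] at this
    linarith
  have hww : Δ * (w ⬝ᵥ w) = (c ⬝ᵥ a ⨯₃ b) ^ 2 := by
    simp only [hw, smul_dotProduct, dotProduct_smul, smul_eq_mul, ← hΔ_def]
    field_simp
  nlinarith

end Reduction

section SpecialLinear

open Matrix

variable {n : Type*} [Fintype n]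

theorem norm_le_sqrt_dotProduct_self (w : n → ℝ) : ‖w‖ ≤ √(w ⬝ᵥ w) := by
  refine (pi_norm_le_iff_of_nonneg (Real.sqrt_nonneg _)).2 fun i => Real.abs_le_sqrt ?_
  rw [sq]
  exact Finset.single_le_sum (f := fun j => w j * w j) (fun j _ => mul_self_nonneg _)
    (Finset.mem_univ i)

theorem isCompact_setOf_dotProduct_self_le (C : ℝ) : IsCompact {w : n → ℝ | w ⬝ᵥ w ≤ C} :=
  (isCompact_closedBall 0 √C).of_isClosed_subset
    (isClosed_le (by fun_prop) continuous_const) fun w hw => by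
      simpa using (norm_le_sqrt_dotProduct_self w).trans (Real.sqrt_le_sqrt hw)

variable [DecidableEq n]

theorem isCompact_setOf_rows_le (C : ℝ) :
    IsCompact {g : Matrix.SpecialLinearGroup n ℝ | ∀ i, g i ⬝ᵥ g i ≤ C} := by
  have hpre : {g : Matrix.SpecialLinearGroup n ℝ | ∀ i, g i ⬝ᵥ g i ≤ C} =
      (fun g : Matrix.SpecialLinearGroup n ℝ => g.1) ⁻¹' Set.univ.pi fun _ => {w | w ⬝ᵥ w ≤ C} :=
    Set.ext fun g => Set.mem_univ_pi.symm
  rw [hpre]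
  exact Matrix.SpecialLinearGroup.isClosedEmbedding_val.isCompact_preimage
    (isCompact_univ_pi fun _ => isCompact_setOf_dotProduct_self_le C)

theorem exists_forall_sum_rows_le (Γ : Subgroup (Matrix.SpecialLinearGroup n ℝ))
    [DiscreteTopology Γ] (g : Matrix.SpecialLinearGroup n ℝ) :
    ∃ γ : Γ, ∀ γ' : Γ, ∑ i, (γ * g : Matrix.SpecialLinearGroup n ℝ) i ⬝ᵥ (γ * g) i ≤
      ∑ i, (γ' * g : Matrix.SpecialLinearGroup n ℝ) i ⬝ᵥ (γ' * g) i := by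
  let F (p : Matrix.SpecialLinearGroup n ℝ) : ℝ := ∑ i, p i ⬝ᵥ p i
  have hF : Tendsto F (cocompact _) atTop := by
    refine tendsto_atTop.2 fun C => ?_
    filter_upwards [(isCompact_setOf_rows_le (n := n) C).compl_mem_cocompact] with p hp
    contrapose! hp
    simp only [Set.mem_compl_iff, not_not]
    exact fun i => (Finset.single_le_sum (f := fun j => p j ⬝ᵥ p j)
      (fun j _ => dotProduct_self_star_nonneg (p j)) (Finset.mem_univ i)).trans hp.le
  have htop : Tendsto (fun γ : Γ => F (γ * g)) cofinite atTop :=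
    hF.comp <| (Homeomorph.mulRight g).isClosedEmbedding.tendsto_cocompact.comp
      (Γ.tendsto_coe_cofinite_of_discrete (isDiscrete_iff_discreteTopology.2 ‹_›))
  exact htop.exists_forall_le

/-- The rows of `q` form a reduced basis: no row can be made shorter by adding to it an integral
combination of the others. -/
def IsRowReduced (q : Matrix n n ℝ) : Prop :=
  ∀ (k : n) (v : n → ℤ), v k = 1 →
    q k ⬝ᵥ q k ≤ ((fun i => (v i : ℝ)) ᵥ* q) ⬝ᵥ ((fun i => (v i : ℝ)) ᵥ* q)

theorem exists_mul_isRowReduced (g : Matrix.SpecialLinearGroup n ℝ) :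
    ∃ γ ∈ (Matrix.SpecialLinearGroup.map (n := n) (Int.castRingHom ℝ)).range,
      IsRowReduced (γ * g : Matrix.SpecialLinearGroup n ℝ).1 := by
  obtain ⟨γ, hγ⟩ := exists_forall_sum_rows_le
    (Matrix.SpecialLinearGroup.map (n := n) (Int.castRingHom ℝ)).range g
  refine ⟨γ, γ.2, fun k v hvk => ?_⟩
  let M : Matrix.SpecialLinearGroup n ℤ := ⟨(1 : Matrix n n ℤ).updateRow k v, by
    have h := det_updateRow_sum (1 : Matrix n n ℤ) k v
    rwa [← vecMul_eq_sum, vecMul_one, hvk, det_one, smul_eq_mul, mul_one] at h⟩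
  have hM : (Matrix.SpecialLinearGroup.map (Int.castRingHom ℝ) M).1 =
      (1 : Matrix n n ℝ).updateRow k fun i => (v i : ℝ) := by
    ext i j
    change (((1 : Matrix n n ℤ).updateRow k v i j : ℤ) : ℝ) = _
    obtain rfl | hi := eq_or_ne i k
    · simp
    · simp [hi, one_apply]
  set q : Matrix n n ℝ := (γ * g : Matrix.SpecialLinearGroup n ℝ).1
  have hMq : (Matrix.SpecialLinearGroup.map (Int.castRingHom ℝ) M).1 * q =
      q.updateRow k ((fun i => (v i : ℝ)) ᵥ* q) := by
    rw [hM, updateRow_mul, one_mul]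
  have hle := hγ (⟨_, M, rfl⟩ * γ)
  rw [Subgroup.coe_mul, mul_assoc] at hle
  change ∑ i, q i ⬝ᵥ q i ≤ ∑ i, ((Matrix.SpecialLinearGroup.map (Int.castRingHom ℝ) M).1 * q) i ⬝ᵥ
    ((Matrix.SpecialLinearGroup.map (Int.castRingHom ℝ) M).1 * q) i at hle
  have herase (r : n → ℝ) : ∑ i ∈ Finset.univ.erase k, q.updateRow k r i ⬝ᵥ q.updateRow k r i =
      ∑ i ∈ Finset.univ.erase k, q i ⬝ᵥ q i :=
    Finset.sum_congr rfl fun i hi => by rw [updateRow_ne (Finset.ne_of_mem_erase hi)]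
  rw [hMq, ← Finset.add_sum_erase _ _ (Finset.mem_univ k),
    ← Finset.add_sum_erase _ _ (Finset.mem_univ k), herase, updateRow_self] at hle
  exact le_of_add_le_add_right hle

end SpecialLinear

section Mahler

open Matrix

variable {n : Type*} [Fintype n]

theorem IsRowReduced.dotProduct_self_le {q : Matrix n n ℝ} (hq : IsRowReduced q) {i j k : n}
    (hj : j ≠ i) (hk : k ≠ i) (s t : ℤ) :
    q i ⬝ᵥ q i ≤ (q i + (s : ℝ) • q j + (t : ℝ) • q k) ⬝ᵥ
      (q i + (s : ℝ) • q j + (t : ℝ) • q k) := by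
  classical
  have hv := hq i (Pi.single i 1 + Pi.single j s + Pi.single k t) (by simp [hj.symm, hk.symm])
  have hcast : (fun l => (((Pi.single i 1 + Pi.single j s + Pi.single k t : n → ℤ) l : ℤ) : ℝ)) =
      Pi.single i 1 + Pi.single j (s : ℝ) + Pi.single k (t : ℝ) := by
    ext l
    simp [Pi.single_apply]
  simpa only [hcast, add_vecMul, single_vecMul, one_smul, row_def] using hv

theorem IsRowReduced.abs_two_mul_dotProduct_le {q : Matrix n n ℝ} (hq : IsRowReduced q) {i j : n}
    (hij : i ≠ j) : |2 * q i ⬝ᵥ q j| ≤ q j ⬝ᵥ q j := by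
  have hplus := hq.dotProduct_self_le hij.symm hij.symm 1 0
  have hminus := hq.dotProduct_self_le hij.symm hij.symm (-1) 0
  simp only [add_dotProduct, dotProduct_add, smul_dotProduct, dotProduct_smul, smul_eq_mul,
    dotProduct_comm (q j) (q i), Int.cast_neg, Int.cast_one, Int.cast_zero] at hplus hminus
  exact abs_le.2 ⟨by linarith, by linarith⟩

theorem IsRowReduced.prod_dotProduct_self_le {q : Matrix (Fin 3) (Fin 3) ℝ}
    (hq : IsRowReduced q) : 3 * ∏ i, q i ⬝ᵥ q i ≤ 8 * q.det ^ 2 := by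
  obtain ⟨k, hk⟩ := Finite.exists_max fun i => q i ⬝ᵥ q i
  have hne : k + 1 ≠ k ∧ k + 2 ≠ k ∧ k + 1 ≠ k + 2 := by fin_cases k <;> decide
  have hab : (2 * q (k + 1) ⬝ᵥ q (k + 2)) ^ 2 ≤
      (q (k + 1) ⬝ᵥ q (k + 1)) * (q (k + 2) ⬝ᵥ q (k + 2)) := by
    rw [← sq_abs, sq]
    refine mul_le_mul ?_ (hq.abs_two_mul_dotProduct_le hne.2.2) (abs_nonneg _)
      (dotProduct_self_star_nonneg _)
    rw [dotProduct_comm]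
    exact hq.abs_two_mul_dotProduct_le hne.2.2.symm
  have hprod : ∏ i, q i ⬝ᵥ q i =
      (q (k + 1) ⬝ᵥ q (k + 1)) * (q (k + 2) ⬝ᵥ q (k + 2)) * (q k ⬝ᵥ q k) := by
    rw [Fin.prod_univ_three]
    fin_cases k <;> simp <;> ring
  have hdet : q.det = q k ⬝ᵥ q (k + 1) ⨯₃ q (k + 2) := by
    have h : q.det = q 0 ⬝ᵥ q 1 ⨯₃ q 2 := by
      rw [triple_product_eq_det]
      congr
      ext i
      fin_cases i <;> rfl
    fin_cases k
    · exact h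
    · exact h.trans (triple_product_permutation _ _ _)
    · exact h.trans (triple_product_permutation _ _ _ |>.trans <| triple_product_permutation _ _ _)
  rw [hprod, hdet, ← mul_assoc]
  exact dotProduct_self_mul_le_of_reduced hab (hk _) (hk _)
    (hq.dotProduct_self_le hne.1 hne.2.1)

variable [DecidableEq n]

/-- The matrices whose rows span a lattice without nonzero vectors of sup norm less than `ε`. -/
def thick (n : Type*) [Fintype n] [DecidableEq n] (ε : ℝ) :
    Set (Matrix.SpecialLinearGroup n ℝ) :=
  {g | ∀ v : n → ℤ, v ≠ 0 → ε ≤ ‖(fun i => (v i : ℝ)) ᵥ* g.1‖}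

theorem isClosed_thick (ε : ℝ) : IsClosed (thick n ε) := by
  simp only [thick, Set.ofPred_forall]
  refine isClosed_iInter fun v => isClosed_iInter fun _ => isClosed_le continuous_const ?_
  exact (continuous_const.matrix_vecMul
    Matrix.SpecialLinearGroup.isClosedEmbedding_val.continuous).norm

theorem map_mul_mem_thick {ε : ℝ} {g : Matrix.SpecialLinearGroup n ℝ} (hg : g ∈ thick n ε)
    (γ : Matrix.SpecialLinearGroup n ℤ) :
    Matrix.SpecialLinearGroup.map (Int.castRingHom ℝ) γ * g ∈ thick n ε := by
  intro v hv
  have hcast : (fun i => (v i : ℝ)) ᵥ* γ.1.map (Int.castRingHom ℝ) =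
      fun j => ((v ᵥ* γ.1) j : ℝ) := by
    ext j
    simp [vecMul, dotProduct]
  have hne : v ᵥ* γ.1 ≠ 0 := by
    have hunit : IsUnit γ.1 := (isUnit_iff_isUnit_det _).2 (by simp)
    exact fun h => hv (vecMul_injective_of_isUnit hunit (h.trans (zero_vecMul _).symm))
  have := hg _ hne
  rwa [← hcast, vecMul_vecMul] at this

theorem sq_le_dotProduct_self_of_mem_thick {ε : ℝ} (hε : 0 ≤ ε)
    {g : Matrix.SpecialLinearGroup n ℝ} (hg : g ∈ thick n ε) (i : n) :
    ε ^ 2 ≤ g i ⬝ᵥ g i := by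
  have hcast : (fun l => (((Pi.single i 1 : n → ℤ) l : ℤ) : ℝ)) = Pi.single i 1 := by
    ext l
    simp [Pi.single_apply]
  have h := hg (Pi.single i 1) (by simp)
  rw [hcast, single_vecMul, one_smul] at h
  exact (Real.le_sqrt hε (dotProduct_self_star_nonneg _)).1
    (h.trans (norm_le_sqrt_dotProduct_self _))

theorem IsRowReduced.dotProduct_self_le_of_mem_thick {ε : ℝ} (hε : 0 < ε)
    {g : Matrix.SpecialLinearGroup (Fin 3) ℝ} (hq : IsRowReduced g.1) (hg : g ∈ thick (Fin 3) ε)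
    (i : Fin 3) : g i ⬝ᵥ g i ≤ 8 / (3 * ε ^ 4) := by
  have hrow := sq_le_dotProduct_self_of_mem_thick hε.le hg
  have herase : ε ^ 4 ≤ ∏ j ∈ Finset.univ.erase i, g j ⬝ᵥ g j := by
    calc ε ^ 4 = ∏ _j ∈ Finset.univ.erase i, ε ^ 2 := by
          rw [Finset.prod_const, Finset.card_erase_of_mem (Finset.mem_univ i), ← pow_mul]; rfl
      _ ≤ _ := Finset.prod_le_prod (fun _ _ => by positivity) fun j _ => hrow j
  have hprod := hq.prod_dotProduct_self_le
  rw [g.2, ← Finset.mul_prod_erase _ _ (Finset.mem_univ i)] at hprod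
  have := mul_le_mul_of_nonneg_left herase (show 0 ≤ g i ⬝ᵥ g i from dotProduct_self_star_nonneg _)
  rw [le_div_iff₀ (by positivity)]
  linarith

end Mahler

section Space

instance : IsTopologicalGroup SL3R := Matrix.SpecialLinearGroup.topologicalGroup

instance : T2Space SL3R := Matrix.SpecialLinearGroup.isClosedEmbedding_val.isEmbedding.t2Space

instance : FirstCountableTopology SL3R :=
  have : FirstCountableTopology (Matrix (Fin 3) (Fin 3) ℝ) :=
    inferInstanceAs (FirstCountableTopology (Fin 3 → Fin 3 → ℝ))
  Matrix.SpecialLinearGroup.isClosedEmbedding_val.isInducing.firstCountableTopology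

instance : DiscreteTopology SL3Z :=
  Matrix.SpecialLinearGroup.discreteSpecialLinearGroupIntRangeSL

theorem mk_mem_image_thick {ε : ℝ} {g : SL3R} :
    (Quotient.mk _ g : XSL3) ∈ Quotient.mk _ '' thick (Fin 3) ε ↔ g ∈ thick (Fin 3) ε := by
  refine ⟨fun ⟨h, hh, hg⟩ => ?_, Set.mem_image_of_mem _⟩
  obtain ⟨γ, hγ⟩ := (mk_rightRel_eq_iff SL3Z).1 hg
  have := map_mul_mem_thick hh γ
  rwa [hγ, inv_mul_cancel_right] at this

theorem isCompact_image_thick {ε : ℝ} (hε : 0 < ε) :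
    IsCompact ((Quotient.mk _ : SL3R → XSL3) '' thick (Fin 3) ε) := by
  have hcompact : IsCompact (thick (Fin 3) ε ∩
      {g : SL3R | ∀ i, g i ⬝ᵥ g i ≤ 8 / (3 * ε ^ 4)}) :=
    (isCompact_setOf_rows_le _).inter_left (isClosed_thick ε)
  convert hcompact.image (isOpenQuotientMap_mk_rightRel SL3Z).continuous using 1
  refine (Set.image_subset_iff.2 fun g hg => ?_).antisymm (Set.image_mono Set.inter_subset_left)
  obtain ⟨_, ⟨γ, rfl⟩, hγ⟩ := exists_mul_isRowReduced g
  have hγg := map_mul_mem_thick hg γ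
  refine ⟨_, ⟨hγg, fun i => hγ.dotProduct_self_le_of_mem_thick hε hγg i⟩, ?_⟩
  refine (mk_rightRel_eq_iff SL3Z).2 ?_
  rw [mul_inv_rev, mul_inv_cancel_left]
  exact SL3Z.inv_mem ⟨γ, rfl⟩

end Space

section DiagonalFlow

open Matrix

/-- Coordinates on the diagonal matrices of trace zero, the exponents of the group `H`. -/
def diagWeight (v : ℝ × ℝ) : Fin 3 → ℝ :=
  ![-(v.1 + v.2), v.1, v.2]

theorem diagWeight_add (v w : ℝ × ℝ) : diagWeight (v + w) = diagWeight v + diagWeight w := by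
  ext i
  fin_cases i <;> simp [diagWeight]; ring

theorem sum_diagWeight (v : ℝ × ℝ) : ∑ i, diagWeight v i = 0 := by
  simp [diagWeight, Fin.sum_univ_three]

/-- The parametrization `(s, t) ↦ diag (exp (-(s + t)), exp s, exp t)` of `H` by `ℝ²`. -/
noncomputable def diagExp (v : ℝ × ℝ) : SL3R :=
  ⟨diagonal fun i => Real.exp (diagWeight v i), by
    rw [det_diagonal, ← Real.exp_sum, sum_diagWeight, Real.exp_zero]⟩

theorem diagExp_add (v w : ℝ × ℝ) : diagExp (v + w) = diagExp v * diagExp w := by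
  refine Subtype.ext ((diagonal_mul_diagonal _ _).trans ?_).symm
  simp only [diagExp, diagWeight_add, Pi.add_apply, Real.exp_add]

theorem diagExp_zero : diagExp 0 = 1 := by
  simpa using diagExp_add 0 0

theorem diagExp_neg (v : ℝ × ℝ) : diagExp (-v) = (diagExp v)⁻¹ := by
  rw [eq_inv_iff_mul_eq_one, ← diagExp_add, neg_add_cancel, diagExp_zero]

theorem continuous_diagExp : Continuous diagExp := by
  refine Continuous.subtype_mk (Continuous.matrix_diagonal (continuous_pi fun i => ?_)) _
  fin_cases i <;> simp only [diagWeight] <;> dsimp <;> fun_prop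

theorem vecMul_diagExp_apply (w : Fin 3 → ℝ) (v : ℝ × ℝ) (i : Fin 3) :
    (w ᵥ* (diagExp v).1) i = w i * Real.exp (diagWeight v i) :=
  vecMul_diagonal _ _ i

theorem conj_diagExp_apply (v : ℝ × ℝ) (g : SL3R) (i j : Fin 3) :
    ((diagExp v)⁻¹ * g * diagExp v) i j =
      g i j * Real.exp (diagWeight v j - diagWeight v i) := by
  have hneg : diagWeight (-v) i = -diagWeight v i := by
    fin_cases i <;> simp [diagWeight]; ring
  rw [← diagExp_neg]
  change (diagonal _ * g.1 * diagonal _ : Matrix _ _ ℝ) i j = _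
  rw [mul_diagonal, diagonal_mul, hneg, sub_eq_neg_add, Real.exp_add]
  ring

theorem isPosDiag3_iff_exists_diagExp {g : SL3R} : IsPosDiag3 g ↔ ∃ v, diagExp v = g := by
  constructor
  · rintro ⟨hoff, hpos⟩
    have hg : g.1 = diagonal fun i => g i i := by
      ext i j
      obtain rfl | hij := eq_or_ne i j
      · simp
      · simp [hij, hoff]
    have hdet : g 0 0 * g 1 1 * g 2 2 = 1 := by
      rw [← Fin.prod_univ_three fun i => g i i, ← det_diagonal, ← hg, g.2]
    refine ⟨(Real.log (g 1 1), Real.log (g 2 2)), Subtype.ext ?_⟩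
    refine (congrArg diagonal (funext fun i => ?_)).trans hg.symm
    fin_cases i
    · have h₁ := (hpos 1).ne'
      have h₂ := (hpos 2).ne'
      simp only [diagWeight, Fin.zero_eta, cons_val_zero, Real.exp_neg, Real.exp_add,
        Real.exp_log (hpos 1), Real.exp_log (hpos 2)]
      field_simp
      linarith
    · exact Real.exp_log (hpos 1)
    · exact Real.exp_log (hpos 2)
  · rintro ⟨v, rfl⟩
    exact ⟨fun i j hij => diagonal_apply_ne _ hij, fun i => by simp [diagExp, Real.exp_pos]⟩

/-- The parametrization of `H`, viewed in the opposite group, which acts on `X` by right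
translation. -/
noncomputable def diagExpHom : Multiplicative (ℝ × ℝ) →* SL3Rᵐᵒᵖ where
  toFun v := MulOpposite.op (diagExp v.toAdd)
  map_one' := congrArg MulOpposite.op diagExp_zero
  map_mul' v w := by rw [toAdd_mul, add_comm, diagExp_add, MulOpposite.op_mul]

instance : IsMulCommutative diagExpHom.range := by
  rw [MonoidHom.range_eq_map]
  infer_instance

theorem hOrbit3_eq_orbit (x : XSL3) : HOrbit3 x = orbit diagExpHom.range x := by
  ext y
  simp only [HOrbit3, isPosDiag3_iff_exists_diagExp, mem_orbit_iff, Subtype.exists,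
    Set.mem_ofPred_eq]
  constructor
  · rintro ⟨_, ⟨v, rfl⟩, rfl⟩
    exact ⟨_, ⟨Multiplicative.ofAdd v, rfl⟩, rfl⟩
  · rintro ⟨_, ⟨v, rfl⟩, rfl⟩
    exact ⟨_, ⟨v.toAdd, rfl⟩, rfl⟩

/-- The flow of `ℝ² ≅ H` on `X` by right translation. -/
noncomputable def diagFlow : Flow (ℝ × ℝ) XSL3 where
  toFun v x := x <• diagExp v
  cont' := (MulOpposite.continuous_op.comp (continuous_diagExp.comp continuous_fst)).smul
    continuous_snd
  map_add' v w x := by rw [add_comm, diagExp_add, MulOpposite.op_mul, mul_smul]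
  map_zero' x := by rw [diagExp_zero, MulOpposite.op_one, one_smul]

theorem diagFlow_apply (v : ℝ × ℝ) (x : XSL3) : diagFlow v x = x <• diagExp v :=
  rfl

theorem rtSL3_image_eq_of_isInvariant {A : Set XSL3} (hA : IsInvariant diagFlow A) {g : SL3R}
    (hg : IsPosDiag3 g) : rtSL3 g '' A = A := by
  obtain ⟨v, rfl⟩ := isPosDiag3_iff_exists_diagExp.1 hg
  refine (Set.image_subset_iff.2 (hA v)).antisymm fun x hx => ⟨_, hA (-v) hx, ?_⟩
  exact (diagFlow.map_add v (-v) x).symm.trans (by rw [add_neg_cancel, diagFlow.map_zero_apply])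

end DiagonalFlow

section UpperUnipotent

open Matrix

/-- The upper unitriangular matrix with superdiagonal entries `a`, `b` and corner entry `c`. -/
def upperUnipotent (a b c : ℝ) : SL3R :=
  ⟨!![1, a, c; 0, 1, b; 0, 0, 1], by simp [det_fin_three]⟩

theorem upperUnipotent_apply_of_le (a b c : ℝ) {i j : Fin 3} (hij : j ≤ i) :
    upperUnipotent a b c i j = (1 : SL3R) i j := by
  fin_cases i <;> fin_cases j <;> simp [upperUnipotent] at hij ⊢

/-- The homogeneous quasi-norm of the part of `g` above the diagonal: the root at the corner makes
it scale linearly under conjugation by `diagExp (0, t)`. -/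
noncomputable def upperSize (g : SL3R) : ℝ :=
  max (max |g 0 1| |g 1 2|) √|g 0 2|

@[fun_prop]
theorem continuous_entry (i j : Fin 3) : Continuous fun g : SL3R => g i j :=
  Matrix.SpecialLinearGroup.isClosedEmbedding_val.continuous.matrix_elem i j

theorem continuous_upperSize : Continuous upperSize := by
  unfold upperSize
  fun_prop

theorem upperSize_one : upperSize 1 = 0 := by
  simp [upperSize]

theorem upperSize_nonneg (g : SL3R) : 0 ≤ upperSize g :=
  le_max_of_le_right (Real.sqrt_nonneg _)

theorem upperSize_conj_diagExp (t : ℝ) (g : SL3R) :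
    upperSize ((diagExp (0, t))⁻¹ * g * diagExp (0, t)) = Real.exp t * upperSize g := by
  simp only [upperSize, conj_diagExp_apply]
  have hsqrt : √(Real.exp (t + t)) = Real.exp t := by
    rw [Real.exp_add, Real.sqrt_mul_self (Real.exp_pos t).le]
  simp [diagWeight, abs_mul, hsqrt, mul_max_of_nonneg,
    (Real.exp_pos t).le, mul_comm]

theorem upperSize_conj_diagExp_neg_log {g : SL3R} (hg : upperSize g ≠ 0) :
    upperSize ((diagExp (0, -Real.log (upperSize g)))⁻¹ * g *
      diagExp (0, -Real.log (upperSize g))) = 1 := by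
  rw [upperSize_conj_diagExp, Real.exp_neg,
    Real.exp_log ((upperSize_nonneg g).lt_of_ne' hg), inv_mul_cancel₀ hg]

theorem abs_apply_le_one_of_upperSize_eq_one {g : SL3R} (hg : upperSize g = 1) :
    |g 0 1| ≤ 1 ∧ |g 1 2| ≤ 1 ∧ |g 0 2| ≤ 1 := by
  obtain ⟨⟨h₀₁, h₁₂⟩, h₀₂⟩ := (max_le_iff.1 hg.le).imp_left max_le_iff.1
  exact ⟨h₀₁, h₁₂, Real.sqrt_le_one.1 h₀₂⟩

theorem ne_one_of_upperSize_eq_one {g : SL3R} (hg : upperSize g = 1) : g ≠ 1 := by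
  rintro rfl
  exact zero_ne_one (upperSize_one.symm.trans hg)

theorem diagWeight_zero_left (t : ℝ) (i : Fin 3) : diagWeight (0, t) i = (i.val - 1) * t := by
  fin_cases i <;> simp [diagWeight]; norm_num

theorem tendsto_conj_diagExp_of_le {ι : Type*} {l : Filter ι} {u : ι → SL3R} {t : ι → ℝ}
    (hu : Tendsto u l (𝓝 1)) (ht : Tendsto t l atTop) {i j : Fin 3} (hij : j ≤ i) :
    Tendsto (fun k => ((diagExp (0, t k))⁻¹ * u k * diagExp (0, t k)) i j) l
      (𝓝 ((1 : SL3R) i j)) := by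
  have hentry : Tendsto (fun k => u k i j) l (𝓝 ((1 : SL3R) i j)) :=
    ((continuous_entry i j).tendsto 1).comp hu
  obtain rfl | hlt := hij.eq_or_lt
  · simpa only [conj_diagExp_apply, sub_self, Real.exp_zero, mul_one] using hentry
  have hzero : (1 : SL3R) i j = 0 := by simp [hlt.ne']
  rw [hzero] at hentry ⊢
  refine squeeze_zero_norm' ?_ (by simpa using hentry.norm)
  filter_upwards [ht.eventually_ge_atTop 0] with k hk
  have hexp : Real.exp (diagWeight (0, t k) j - diagWeight (0, t k) i) ≤ 1 := by
    rw [Real.exp_le_one_iff, diagWeight_zero_left, diagWeight_zero_left]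
    have : (j.val : ℝ) ≤ i.val := by exact_mod_cast hij
    nlinarith
  rw [conj_diagExp_apply, norm_mul, Real.norm_eq_abs (Real.exp _), Real.abs_exp]
  exact mul_le_of_le_one_right (norm_nonneg _) hexp

theorem exists_tendsto_upperUnipotent {ι : Type*} {F : Ultrafilter ι} {W : ι → SL3R}
    (hlower : ∀ i j, j ≤ i → Tendsto (fun k => W k i j) F (𝓝 ((1 : SL3R) i j)))
    (hsize : ∀ k, upperSize (W k) = 1) :
    ∃ a b c, Tendsto W F (𝓝 (upperUnipotent a b c)) := by
  have hlim {f : ι → ℝ} (hf : ∀ k, |f k| ≤ 1) : ∃ a, Tendsto f F (𝓝 a) := by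
    obtain ⟨a, -, ha⟩ := (isCompact_Icc (a := (-1 : ℝ)) (b := 1)).ultrafilter_le_nhds (F.map f)
      (le_principal_iff.2 <| mem_map.2 <| Eventually.of_forall fun k => abs_le.1 (hf k))
    exact ⟨a, ha⟩
  have hbound k := abs_apply_le_one_of_upperSize_eq_one (hsize k)
  obtain ⟨a, ha⟩ := hlim fun k => (hbound k).1
  obtain ⟨b, hb⟩ := hlim fun k => (hbound k).2.1
  obtain ⟨c, hc⟩ := hlim fun k => (hbound k).2.2
  refine ⟨a, b, c, Matrix.SpecialLinearGroup.isClosedEmbedding_val.isEmbedding.tendsto_nhds_iff.2 <|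
    tendsto_pi_nhds.2 fun i => tendsto_pi_nhds.2 fun j => ?_⟩
  by_cases hij : j ≤ i
  · rw [upperUnipotent_apply_of_le a b c hij]
    exact hlower i j hij
  · fin_cases i <;> fin_cases j <;> first | exact absurd (by decide) hij | assumption

end UpperUnipotent

section OmegaLimit

variable {τ α X : Type*} [TopologicalSpace X] {f : Filter τ} {ϕ : τ → α → X} {x : α}
  {K : Set X}

theorem mem_omegaLimit_singleton_of_tendsto {ι : Type*} {l : Filter ι} [l.NeBot] {t : ι → τ}
    (ht : Tendsto t l f) {y : X} (hy : Tendsto (fun i => ϕ (t i) x) l (𝓝 y)) :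
    y ∈ omegaLimit f ϕ {x} :=
  (mem_omegaLimit_singleton_iff_mapClusterPt _ _ _ _).2 (hy.mapClusterPt.of_comp ht)

variable [T2Space X]

theorem exists_closure_image2_subset (hK : IsCompact K) (hx : ∀ᶠ t in f, ϕ t x ∈ K) :
    ∃ s ∈ f, closure (Set.image2 ϕ s {x}) ⊆ K :=
  ⟨_, hx, hK.isClosed.closure_subset_iff.2 <|
    Set.image2_subset_iff.2 fun _ ht _ hy => Set.mem_singleton_iff.1 hy ▸ ht⟩

theorem omegaLimit_singleton_subset (hK : IsCompact K) (hx : ∀ᶠ t in f, ϕ t x ∈ K) :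
    omegaLimit f ϕ {x} ⊆ K := by
  obtain ⟨s, hs, hsK⟩ := exists_closure_image2_subset hK hx
  exact (omegaLimit_subset_closure_image2 _ _ _ hs).trans hsK

theorem isCompact_omegaLimit_singleton (hK : IsCompact K) (hx : ∀ᶠ t in f, ϕ t x ∈ K) :
    IsCompact (omegaLimit f ϕ {x}) :=
  hK.of_isClosed_subset (isClosed_omegaLimit _ _ _) (omegaLimit_singleton_subset hK hx)

theorem nonempty_omegaLimit_singleton [f.NeBot] (hK : IsCompact K)
    (hx : ∀ᶠ t in f, ϕ t x ∈ K) : (omegaLimit f ϕ {x}).Nonempty :=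
  nonempty_omegaLimit_of_isCompact_absorbing _ _ _ hK (exists_closure_image2_subset hK hx)
    (Set.singleton_nonempty x)

end OmegaLimit

section BoundedConeOrbit

open Matrix

theorem exists_mul_diagExp_notMem_thick {g : SL3R} (hg : g 1 2 = 0) {ε : ℝ} (hε : 0 < ε) :
    ∃ v, g * diagExp v ∉ thick (Fin 3) ε := by
  -- The last entry of the row `g 1` vanishes, and `diagExp (-t, 2 * t)` scales the others
  -- by `exp (-t)`.
  by_contra! hthick
  have hrow (t : ℝ) : ε ^ 2 ≤ (g 1 0 ^ 2 + g 1 1 ^ 2) * Real.exp (-t) ^ 2 := by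
    have hentry (j : Fin 3) : (g * diagExp (-t, 2 * t)) 1 j =
        g 1 j * Real.exp (diagWeight (-t, 2 * t) j) :=
      vecMul_diagExp_apply (g 1) _ j
    have := sq_le_dotProduct_self_of_mem_thick hε.le (hthick (-t, 2 * t)) 1
    simp only [dotProduct, Fin.sum_univ_three, hentry, hg, diagWeight] at this
    ring_nf at this ⊢
    simpa using this
  have hlim : Tendsto (fun t => (g 1 0 ^ 2 + g 1 1 ^ 2) * Real.exp (-t) ^ 2) atTop (𝓝 0) := by
    simpa using ((Real.tendsto_exp_neg_atTop_nhds_zero.pow 2).const_mul (g 1 0 ^ 2 + g 1 1 ^ 2))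
  exact (pow_pos hε 2).not_ge (ge_of_tendsto' hlim hrow)

theorem apply_one_two_eq_zero_of_mul {g u : SL3R} (hu : upperSize u = 0) (hgu : (g * u) 1 2 = 0) :
    g 1 2 = 0 := by
  obtain ⟨⟨h₀₁, h₁₂⟩, h₀₂⟩ := (max_le_iff.1 hu.le).imp_left max_le_iff.1
  rw [abs_nonpos_iff] at h₀₁ h₁₂
  rw [Real.sqrt_le_left le_rfl, zero_pow two_ne_zero, abs_nonpos_iff] at h₀₂
  have hdet := u.2
  rw [det_fin_three] at hdet
  have h₂₂ : u 2 2 ≠ 0 := by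
    intro h₂₂
    simp [h₀₁, h₁₂, h₀₂, h₂₂] at hdet
  change (g.1 * u.1) 1 2 = 0 at hgu
  simpa [mul_apply, Fin.sum_univ_three, h₁₂, h₀₂, h₂₂] using hgu

theorem isInvariant_omegaLimit_diagFlow (x : XSL3) :
    IsInvariant diagFlow (omegaLimit atTop diagFlow {x}) :=
  diagFlow.isInvariant_omegaLimit _ _ fun v => tendsto_atTop_add_const_left _ v tendsto_id

theorem upperSize_ne_zero_of_mem_omegaLimit {g u : SL3R} (hg : g 1 2 = 0) {ε : ℝ} (hε : 0 < ε)
    (hbdd : ∀ᶠ v in atTop, g * diagExp v ∈ thick (Fin 3) ε) {y : XSL3}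
    (hy : y ∈ omegaLimit atTop diagFlow {Quotient.mk _ g}) {v : ℝ × ℝ}
    (hyu : diagFlow v (Quotient.mk _ g) = y <• u) : upperSize u ≠ 0 := by
  intro hu
  have hrep : y = Quotient.mk _ (g * diagExp v * u⁻¹) := by
    rw [← mk_rightRel_smul, ← mk_rightRel_smul, ← diagFlow_apply, hyu, MulOpposite.op_inv,
      inv_smul_smul]
  have hentry : (g * diagExp v * u⁻¹) 1 2 = 0 := by
    refine apply_one_two_eq_zero_of_mul hu ?_
    rw [inv_mul_cancel_right]
    exact (vecMul_diagExp_apply (g 1) v 2).trans (by rw [hg, zero_mul])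
  obtain ⟨w, hw⟩ := exists_mul_diagExp_notMem_thick hentry hε
  refine hw (mk_mem_image_thick.1 ?_)
  rw [← mk_rightRel_smul, ← hrep]
  exact omegaLimit_singleton_subset (isCompact_image_thick hε)
    (hbdd.mono fun _ => Set.mem_image_of_mem _) (isInvariant_omegaLimit_diagFlow _ w hy)

theorem exists_smul_upperUnipotent_of_tendsto_one {x y₀ : XSL3}
    (hΩ : IsCompact (omegaLimit atTop diagFlow {x})) (hy₀ : y₀ ∈ omegaLimit atTop diagFlow {x})
    {v : ℕ → ℝ × ℝ} {u : ℕ → SL3R} (hv : Tendsto v atTop atTop) (hu : Tendsto u atTop (𝓝 1))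
    (hvu : ∀ k, diagFlow (v k) x = y₀ <• u k) (hu₀ : ∀ k, upperSize (u k) ≠ 0) :
    ∃ y ∈ omegaLimit atTop diagFlow {x}, ∃ a b c, upperSize (upperUnipotent a b c) = 1 ∧
      y <• upperUnipotent a b c ∈ omegaLimit atTop diagFlow {x} := by
  let t k := -Real.log (upperSize (u k))
  have ht : Tendsto t atTop atTop := by
    refine tendsto_neg_atBot_atTop.comp <| Real.tendsto_log_nhdsNE_zero.comp <|
      tendsto_nhdsWithin_iff.2 ⟨?_, .of_forall hu₀⟩
    exact upperSize_one ▸ (continuous_upperSize.tendsto 1).comp hu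
  let W k := (diagExp (0, t k))⁻¹ * u k * diagExp (0, t k)
  have hW k : upperSize (W k) = 1 := upperSize_conj_diagExp_neg_log (hu₀ k)
  have hshear k : diagFlow (0, t k) y₀ <• W k = diagFlow ((0, t k) + v k) x := by
    rw [diagFlow.map_add, hvu, diagFlow_apply, diagFlow_apply, smul_smul, smul_smul,
      ← MulOpposite.op_mul, ← MulOpposite.op_mul]
    simp only [W, mul_assoc, mul_inv_cancel_left]
  let F := Ultrafilter.of (atTop : Filter ℕ)
  have hF : (F : Filter ℕ) ≤ atTop := Ultrafilter.of_le _
  obtain ⟨a, b, c, habc⟩ := exists_tendsto_upperUnipotent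
    (fun i j hij => (tendsto_conj_diagExp_of_le hu ht hij).mono_left hF) hW
  obtain ⟨y, hy, hlim⟩ := hΩ.ultrafilter_le_nhds
    (F.map fun k => diagFlow (0, t k) y₀) (le_principal_iff.2 <| mem_map.2 <|
      Eventually.of_forall fun k => isInvariant_omegaLimit_diagFlow x (0, t k) hy₀)
  refine ⟨y, hy, a, b, c, ?_, mem_omegaLimit_singleton_of_tendsto
    (t := fun k => (0, t k) + v k) (l := F) ?_ ?_⟩
  · refine tendsto_nhds_unique ((continuous_upperSize.tendsto _).comp habc) ?_
    exact tendsto_const_nhds.congr fun k => (hW k).symm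
  · refine (tendsto_atTop_mono' _ ?_ hv).mono_left hF
    filter_upwards [ht.eventually_ge_atTop 0] with k hk
    exact le_add_of_nonneg_left ⟨le_rfl, hk⟩
  · simp only [← hshear]
    exact ((MulOpposite.continuous_op.tendsto _).comp habc).smul hlim

theorem exists_smul_upperUnipotent_mem_omegaLimit {g : SL3R} (hg : g 1 2 = 0) {ε : ℝ}
    (hε : 0 < ε) (hbdd : ∀ᶠ v in atTop, g * diagExp v ∈ thick (Fin 3) ε) :
    ∃ y ∈ omegaLimit atTop diagFlow {(Quotient.mk _ g : XSL3)}, ∃ a b c,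
      upperSize (upperUnipotent a b c) = 1 ∧
        y <• upperUnipotent a b c ∈ omegaLimit atTop diagFlow {(Quotient.mk _ g : XSL3)} := by
  have hK := isCompact_image_thick hε
  have hx : ∀ᶠ v in atTop, diagFlow v (Quotient.mk _ g) ∈ Quotient.mk _ '' thick (Fin 3) ε :=
    hbdd.mono fun _ => Set.mem_image_of_mem _
  obtain ⟨y₀, hy₀⟩ := nonempty_omegaLimit_singleton hK hx
  obtain ⟨p, hp, hyp⟩ := exists_seq_forall_of_frequently <| frequently_eq_smul_rightRel SL3Z <|
    (mem_omegaLimit_singleton_iff_mapClusterPt _ _ _ _).1 hy₀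
  exact exists_smul_upperUnipotent_of_tendsto_one (isCompact_omegaLimit_singleton hK hx) hy₀
    (tendsto_fst.comp hp) (tendsto_snd.comp hp) hyp fun k =>
      upperSize_ne_zero_of_mem_omegaLimit hg hε hbdd hy₀ (hyp k)

end BoundedConeOrbit

section Rigidity

theorem tendsto_conj_diagExp_upperUnipotent (a b c : ℝ) :
    Tendsto (fun t => (diagExp (0, t))⁻¹ * upperUnipotent a b c * diagExp (0, t)) atBot (𝓝 1) := by
  refine Matrix.SpecialLinearGroup.isClosedEmbedding_val.isEmbedding.tendsto_nhds_iff.2 <|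
    tendsto_pi_nhds.2 fun i => tendsto_pi_nhds.2 fun j => ?_
  refine Tendsto.congr (fun t => (conj_diagExp_apply (0, t) (upperUnipotent a b c) i j).symm) ?_
  simp only [diagWeight_zero_left, ← sub_mul, sub_sub_sub_cancel_right]
  obtain rfl | hne := eq_or_ne i j
  · simp [upperUnipotent_apply_of_le a b c le_rfl]
  obtain hij | hij := hne.lt_or_gt
  · have hpos : (0 : ℝ) < j.val - i.val := sub_pos.2 (by exact_mod_cast hij)
    have hexp := (Real.tendsto_exp_atBot.comp (tendsto_id.const_mul_atBot hpos)).const_mul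
      (upperUnipotent a b c i j)
    simpa [hne] using hexp
  · simp [upperUnipotent_apply_of_le a b c hij.le, hne]

theorem upperUnipotent_eq_one_of_isCompact_hOrbit3 {y : XSL3} {a b c : ℝ}
    (hy : IsCompact (HOrbit3 y)) (hyu : IsCompact (HOrbit3 (y <• upperUnipotent a b c))) :
    upperUnipotent a b c = 1 := by
  rw [hOrbit3_eq_orbit] at hy hyu
  let A (t : ℝ) : diagExpHom.range := ⟨_, Multiplicative.ofAdd (0, t), rfl⟩
  refine MulOpposite.op_injective <|
    (isLocallyFree_rightRel SL3Z).eq_one_of_isCompact_orbit hy hyu (l := atBot) (a := A) ?_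
  refine ((MulOpposite.continuous_op.tendsto _).comp
    (tendsto_conj_diagExp_upperUnipotent a b c)).congr fun t => ?_
  simp only [Function.comp_apply, MulOpposite.op_mul, MulOpposite.op_inv, mul_assoc]
  rfl

end Rigidity

section Diophantine

open Matrix

theorem distToInt_le (x : ℝ) (m : ℤ) : distToInt x ≤ |x - m| :=
  round_le x m

theorem distToInt_nonneg (x : ℝ) : 0 ≤ distToInt x :=
  abs_nonneg _

theorem distToInt_nat_mul_le (k : ℕ) (x : ℝ) : distToInt (k * x) ≤ k * distToInt x := by
  have := distToInt_le (k * x) (k * round x)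
  rwa [Int.cast_mul, Int.cast_natCast, ← mul_sub, abs_mul, Nat.abs_cast] at this

theorem distToInt_natAbs_mul_le (n m : ℤ) (x : ℝ) : distToInt (n.natAbs * x) ≤ |n * x + m| := by
  rw [Nat.cast_natAbs, Int.cast_abs]
  obtain h | h := abs_choice (n : ℝ)
  · simpa [h] using distToInt_le (n * x) (-m)
  · have := distToInt_le (-n * x) m
    rwa [← abs_neg, neg_sub, neg_mul, sub_neg_eq_add, add_comm, ← neg_mul, ← h] at this

theorem exists_pos_eventually_le_of_liminf_ne_zero {ι : Type*} {l : Filter ι} {f : ι → ℝ}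
    (hf : l.liminf (fun i => ENNReal.ofReal (f i)) ≠ 0) : ∃ d > 0, ∀ᶠ i in l, d ≤ f i := by
  obtain ⟨d, hd₀, hd⟩ := ENNReal.lt_iff_exists_nnreal_btwn.1 (pos_iff_ne_zero.2 hf)
  refine ⟨d, by exact_mod_cast hd₀, (eventually_lt_of_lt_liminf hd).mono fun i hi => ?_⟩
  exact ((ENNReal.lt_ofReal_iff_toReal_lt ENNReal.coe_ne_top).1 hi).le

theorem mul_distToInt_mul_le (k n : ℕ) (α β : ℝ) :
    (k * n : ℕ) * distToInt ((k * n : ℕ) * α) * distToInt ((k * n : ℕ) * β) ≤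
      k ^ 3 * (n * distToInt (n * α) * distToInt (n * β)) := by
  have hk (γ : ℝ) : distToInt ((k * n : ℕ) * γ) ≤ k * distToInt (n * γ) := by
    rw [Nat.cast_mul, mul_assoc]
    exact distToInt_nat_mul_le k _
  calc _ ≤ (k * n : ℕ) * (k * distToInt (n * α)) * (k * distToInt (n * β)) := by
        have := distToInt_nonneg (n * α)
        have := distToInt_nonneg ((k * n : ℕ) * β)
        gcongr <;> apply hk
    _ = k ^ 3 * (n * distToInt (n * α) * distToInt (n * β)) := by push_cast; ring

theorem exists_pos_le_of_liminf_ne_zero {α β : ℝ}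
    (h : atTop.liminf (fun n : ℕ =>
      ENNReal.ofReal ((n : ℝ) * distToInt (n * α) * distToInt (n * β))) ≠ 0) :
    ∃ c > 0, ∀ n : ℕ, n ≠ 0 → c ≤ n * distToInt (n * α) * distToInt (n * β) := by
  obtain ⟨d, hd, hev⟩ := exists_pos_eventually_le_of_liminf_ne_zero h
  obtain ⟨k, hk⟩ := eventually_atTop.1 (hev.and (eventually_ge_atTop 1))
  have hk₀ : (0 : ℝ) < k := by exact_mod_cast (hk k le_rfl).2
  refine ⟨d / k ^ 3, by positivity, fun n hn => ?_⟩
  rw [div_le_iff₀' (by positivity)]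
  exact (hk _ (Nat.le_mul_of_pos_right k (Nat.pos_of_ne_zero hn))).1.trans
    (mul_distToInt_mul_le k n α β)

theorem vecMul_upperUnipotent_mul_diagExp (α β : ℝ) (v : ℝ × ℝ) (w : Fin 3 → ℝ) :
    w ᵥ* (upperUnipotent α 0 β * diagExp v).1 =
      ![w 0 * Real.exp (-(v.1 + v.2)), (w 0 * α + w 1) * Real.exp v.1,
        (w 0 * β + w 2) * Real.exp v.2] := by
  ext i
  rw [Matrix.SpecialLinearGroup.coe_mul, ← vecMul_vecMul, vecMul_diagExp_apply]
  fin_cases i <;> simp [upperUnipotent, diagWeight, vecMul, dotProduct, Fin.sum_univ_three]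

theorem one_le_norm_of_ne_zero_of_apply_zero_eq_zero {α β : ℝ} {v : ℝ × ℝ} (hv : 0 ≤ v)
    {z : Fin 3 → ℤ} (hz : z ≠ 0) (hz₀ : z 0 = 0) :
    1 ≤ ‖(fun i => (z i : ℝ)) ᵥ* (upperUnipotent α 0 β * diagExp v).1‖ := by
  obtain ⟨i, hi⟩ := Function.ne_iff.1 hz
  refine le_trans ?_ (norm_le_pi_norm _ i)
  have hzi : (1 : ℝ) ≤ |(z i : ℝ)| := by exact_mod_cast Int.one_le_abs hi
  rw [vecMul_upperUnipotent_mul_diagExp]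
  fin_cases i
  · exact absurd hz₀ hi
  · simpa [hz₀, abs_mul] using
      hzi.trans (le_mul_of_one_le_right (abs_nonneg _) (Real.one_le_exp hv.1))
  · simpa [hz₀, abs_mul] using
      hzi.trans (le_mul_of_one_le_right (abs_nonneg _) (Real.one_le_exp hv.2))

theorem upperUnipotent_mul_diagExp_mem_thick {α β ε : ℝ} (hε : ε ≤ 1)
    (h : ∀ n m₁ m₂ : ℤ, n ≠ 0 → ε ^ 3 ≤ |n * (n * α + m₁) * (n * β + m₂)|) {v : ℝ × ℝ}
    (hv : 0 ≤ v) : upperUnipotent α 0 β * diagExp v ∈ thick (Fin 3) ε := by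
  intro z hz
  by_cases hz₀ : z 0 = 0
  · exact hε.trans (one_le_norm_of_ne_zero_of_apply_zero_eq_zero hv hz hz₀)
  set w := (fun i => (z i : ℝ)) ᵥ* (upperUnipotent α 0 β * diagExp v).1 with hw
  have hprod : w 0 * w 1 * w 2 = z 0 * (z 0 * α + z 1) * (z 0 * β + z 2) := by
    rw [hw, vecMul_upperUnipotent_mul_diagExp]
    simp [Real.exp_neg, Real.exp_add]
    field_simp
  have hcube : ε ^ 3 ≤ ‖w‖ ^ 3 := by
    calc ε ^ 3 ≤ |w 0 * w 1 * w 2| := hprod ▸ h (z 0) (z 1) (z 2) hz₀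
      _ = ∏ i, ‖w i‖ := by simp [Fin.prod_univ_three, abs_mul]
      _ ≤ ∏ _i : Fin 3, ‖w‖ :=
        Finset.prod_le_prod (fun i _ => norm_nonneg (w i)) fun i _ => norm_le_pi_norm w i
      _ = ‖w‖ ^ 3 := Fin.prod_const 3 _
  exact (Odd.strictMono_pow (by decide)).le_iff_le.1 hcube

theorem exists_eventually_mem_thick_of_liminf_ne_zero {α β : ℝ}
    (h : atTop.liminf (fun n : ℕ =>
      ENNReal.ofReal ((n : ℝ) * distToInt (n * α) * distToInt (n * β))) ≠ 0) :
    ∃ ε > 0, ∀ᶠ v in atTop, upperUnipotent α 0 β * diagExp v ∈ thick (Fin 3) ε := by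
  obtain ⟨c, hc, hcle⟩ := exists_pos_le_of_liminf_ne_zero h
  have hmin : 0 < min c 1 := lt_min hc one_pos
  refine ⟨min c 1, hmin, (eventually_ge_atTop 0).mono fun v hv =>
    upperUnipotent_mul_diagExp_mem_thick (min_le_right _ _) (fun n m₁ m₂ hn => ?_) hv⟩
  calc min c 1 ^ 3 ≤ min c 1 := pow_le_of_le_one hmin.le (min_le_right _ _) three_ne_zero
    _ ≤ n.natAbs * distToInt (n.natAbs * α) * distToInt (n.natAbs * β) :=
      (min_le_left _ _).trans (hcle _ (Int.natAbs_ne_zero.2 hn))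
    _ ≤ n.natAbs * |n * α + m₁| * |n * β + m₂| := by
      have := distToInt_nonneg (n.natAbs * α)
      have := distToInt_nonneg (n.natAbs * β)
      gcongr <;> apply distToInt_natAbs_mul_le
    _ = |n * (n * α + m₁) * (n * β + m₂)| := by
      rw [abs_mul, abs_mul, Nat.cast_natAbs, Int.cast_abs]

end Diophantine

/-- Cassels–Swinnerton-Dyer / Margulis: if every nonempty compact
`H`-invariant subset of `X = SL(3,ℤ)\SL(3,ℝ)` is a union of compact `H`-orbits (i.e.
every point of such a set has compact `H`-orbit), then Littlewood's conjecture holds: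
`liminf_{n→∞} n‖nα‖‖nβ‖ = 0` for all real `α`, `β`. -/
theorem margulis_compact_orbits_implies_littlewood
    (horb : ∀ A : Set XSL3, A.Nonempty → IsCompact A →
      (∀ g : SL3R, IsPosDiag3 g → rtSL3 g '' A = A) →
      ∀ x ∈ A, IsCompact (HOrbit3 x)) :
    ∀ α β : ℝ,
      Filter.atTop.liminf (fun n : ℕ =>
        ENNReal.ofReal ((n : ℝ) * distToInt (n * α) * distToInt (n * β))) = 0 := by
  intro α β
  by_contra hliminf
  obtain ⟨ε, hε, hbdd⟩ := exists_eventually_mem_thick_of_liminf_ne_zero hliminf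
  have hΩ : IsCompact (omegaLimit atTop diagFlow {Quotient.mk _ (upperUnipotent α 0 β)}) :=
    isCompact_omegaLimit_singleton (isCompact_image_thick hε)
      (hbdd.mono fun _ => Set.mem_image_of_mem _)
  obtain ⟨y, hy, a, b, c, hsize, hyu⟩ := exists_smul_upperUnipotent_mem_omegaLimit
    (g := upperUnipotent α 0 β) rfl hε hbdd
  have hcompact := horb _ ⟨y, hy⟩ hΩ fun _ hg =>
    rtSL3_image_eq_of_isInvariant (isInvariant_omegaLimit_diagFlow _) hg
  exact ne_one_of_upperSize_eq_one hsize
    (upperUnipotent_eq_one_of_isCompact_hOrbit3 (hcompact y hy) (hcompact _ hyu))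
end
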